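/- Let RG be a region graph with exactly three terminal vertices (n = 3) satisfying Assumption 1. Then RG is not feasible if and only if RG is terminal-separable and condition (C-IR) holds. -/

import Mathlib

namespace SumNetworksPaper

/-- `SuperReg Adj Θ R` : `R` belongs to the super region generated by `Θ`:
the smallest set containing `Θ` and containing every vertex whose parent set
is nonempty and entirely contained in the set. -/
inductive SuperReg {V : Type} (Adj : V → V → Prop) (Θ : Set V) : V → Prop
  | base {R : V} : R ∈ Θ → SuperReg Adj Θ R
  | step {R : V} : (∃ P, Adj P R) → (∀ P, Adj P R → SuperReg Adj Θ P) →
      SuperReg Adj Θ R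

/-- The super region `reg(Θ)` as a set. -/
def superReg {V : Type} (Adj : V → V → Prop) (Θ : Set V) : Set V :=
  {R | SuperReg Adj Θ R}

/-- A region graph: a finite directed acyclic simple graph with three source
vertices `S 0, S 1, S 2` (which have no parents) and `n` terminal vertices
`T 0, …, T (n-1)`, in which every non-source vertex has at least two parents.
`Adj P R` means that there is an edge from `P` to `R`, i.e. `P` is a parent of `R`. -/
structure RegionGraph (n : ℕ) where
  V : Type
  fintypeV : Fintype V
  Adj : V → V → Prop
  acyclic : ∀ v : V, ¬ Relation.TransGen Adj v v
  S : Fin 3 → V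
  T : Fin n → V
  S_inj : Function.Injective S
  T_inj : Function.Injective T
  source_no_parent : ∀ (i : Fin 3) (v : V), ¬ Adj v (S i)
  two_parents : ∀ v : V, (∀ i : Fin 3, v ≠ S i) →
    ∃ p q : V, p ≠ q ∧ Adj p v ∧ Adj q v

namespace RegionGraph

variable {n : ℕ} (G : RegionGraph n)

/-- The super region `reg(Θ)`. -/
def reg (Θ : Set G.V) : Set G.V := superReg G.Adj Θ

/-- `reg°(Θ) = reg(Θ) ∖ Θ`. -/
def regO (Θ : Set G.V) : Set G.V := G.reg Θ \ Θ

/-- `reg(S_i, S_j)`. -/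
def regPair (i j : Fin 3) : Set G.V := G.reg {G.S i, G.S j}

/-- `u → v` : there is a directed path from `u` to `v` (possibly trivial). -/
def Reaches (u v : G.V) : Prop := Relation.ReflTransGen G.Adj u v

/-- `Π = reg(S_1,S_2) ∪ reg(S_1,S_3) ∪ reg(S_2,S_3)`. -/
def bigPi : Set G.V := G.regPair 0 1 ∪ G.regPair 0 2 ∪ G.regPair 1 2

/-- `Ω_I` : vertices outside `Π` reaching exactly the terminals `T j`, `j ∈ I`. -/
def Omega (I : Set (Fin n)) : Set G.V :=
  {R | R ∉ G.bigPi ∧ ∀ j : Fin n, j ∈ I ↔ G.Reaches R (G.T j)}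

/-- `Λ_I` : vertices of `Π` having a child in `Ω_I`. -/
def Lambda (I : Set (Fin n)) : Set G.V :=
  {Q | Q ∈ G.bigPi ∧ ∃ R, G.Adj Q R ∧ R ∈ G.Omega I}

/-- Assumption 1: no terminal vertex lies in `Π`. -/
def Assumption1 : Prop := ∀ j : Fin n, G.T j ∉ G.bigPi

/-- Terminal-separability: `Ω_I = ∅` whenever `|I| > 1`. -/
def TerminalSeparable : Prop :=
  ∀ I : Set (Fin n), 1 < I.ncard → G.Omega I = ∅

/-- A linear code of the region graph over `F`. -/
def IsLinearCode (F : Type) [Field F] (d : G.V → Fin 3 → F) : Prop :=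
  (∀ i : Fin 3, d (G.S i) = Pi.single i 1) ∧
  ∀ v : G.V, (∀ i : Fin 3, v ≠ G.S i) →
    d v ∈ Submodule.span F (d '' {p | G.Adj p v})

/-- A linear solution: a linear code giving `ᾱ = (1,1,1)` at every terminal. -/
def IsLinearSolution (F : Type) [Field F] (d : G.V → Fin 3 → F) : Prop :=
  G.IsLinearCode F d ∧ ∀ j : Fin n, d (G.T j) = fun _ => 1

/-- Feasibility: existence of a linear solution over some finite field. -/
def Feasible : Prop :=
  ∃ (F : Type) (_ : Field F) (_ : Fintype F) (d : G.V → Fin 3 → F),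
    G.IsLinearSolution F d

/-- Conditions (1)–(3) on a family `{d_R : R ∈ Π}`. -/
def Conds123 (F : Type) [Field F] (d : G.V → Fin 3 → F) : Prop :=
  (∀ i : Fin 3, d (G.S i) = Pi.single i 1) ∧
  (∀ R ∈ G.bigPi, (∀ i : Fin 3, R ≠ G.S i) →
    d R ∈ Submodule.span F (d '' {p | G.Adj p R})) ∧
  ∀ j : Fin n, (fun _ => (1 : F)) ∈ Submodule.span F (d '' G.Lambda {j})

/-- `I` is a partition of `Π` into nonempty classes. -/
def IsPartitionOfPi (I : Set (Set G.V)) : Prop :=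
  (∀ Δ ∈ I, Δ.Nonempty ∧ Δ ⊆ G.bigPi) ∧
  ⋃₀ I = G.bigPi ∧
  ∀ Δ ∈ I, ∀ Δ' ∈ I, Δ ≠ Δ' → Δ ∩ Δ' = ∅

/-- The three sources lie in three distinct classes of the partition. -/
def SourcesSeparated (I : Set (Set G.V)) : Prop :=
  ∀ Δ ∈ I, ∀ i j : Fin 3, G.S i ∈ Δ → G.S j ∈ Δ → i = j

/-- `[S_i]_i = [S_i]_{i,j₁} ∪ [S_i]_{i,j₂}` for the class `Δ` of `S_i`. -/
def srcSub (i : Fin 3) (Δ : Set G.V) : Set G.V :=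
  Δ ∩ ⋃ (j : Fin 3) (_ : j ≠ i), G.regPair i j

/-- `X` is a subclass of the class `Δ`. -/
def IsSubclass (Δ X : Set G.V) : Prop :=
  (∃ i : Fin 3, G.S i ∈ Δ ∧
    (X = G.srcSub i Δ ∨
      ∃ j k : Fin 3, j ≠ k ∧ j ≠ i ∧ k ≠ i ∧ X = Δ ∩ G.regPair j k)) ∨
  ((∀ i : Fin 3, G.S i ∉ Δ) ∧ ∃ i j : Fin 3, i ≠ j ∧ X = Δ ∩ G.regPair i j)

/-- The two classes `Δ'`, `Δ''` are connected. -/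
def ClassesConnected (Δ' Δ'' : Set G.V) : Prop :=
  (∃ (j : Fin n) (X' X'' : Set G.V),
      G.IsSubclass Δ' X' ∧ G.IsSubclass Δ'' X'' ∧ G.Lambda {j} ⊆ X' ∪ X'') ∨
  ∃ i j : Fin 3, i ≠ j ∧
    (G.reg (Δ' ∩ G.regPair i j) ∩ G.reg (Δ'' ∩ G.regPair i j)).Nonempty

/-- The partition `I` of `Π` is compatible. -/
def Compatible (I : Set (Set G.V)) : Prop :=
  G.SourcesSeparated I ∧
  (∀ Δ' ∈ I, ∀ Δ'' ∈ I, Δ' ≠ Δ'' → ¬ G.ClassesConnected Δ' Δ'') ∧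
  ∀ (j : Fin n) (i₁ i₂ : Fin 3), i₁ ≠ i₂ →
    ∀ Δ₁ ∈ I, ∀ Δ₂ ∈ I, G.S i₁ ∈ Δ₁ → G.S i₂ ∈ Δ₂ →
      ¬ (G.Lambda {j} ⊆ G.srcSub i₁ Δ₁ ∪ G.srcSub i₂ Δ₂ ∪
          ⋃₀ {X : Set G.V | ∃ Δ ∈ I, (∀ i : Fin 3, G.S i ∉ Δ) ∧
                X = Δ ∩ G.regPair i₁ i₂})

/-- `I'` is obtained from `I` by merging two connected classes. -/
def IsContractionStep (I I' : Set (Set G.V)) : Prop :=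
  ∃ Δ' Δ'', Δ' ∈ I ∧ Δ'' ∈ I ∧ Δ' ≠ Δ'' ∧ G.ClassesConnected Δ' Δ'' ∧
    I' = insert (Δ' ∪ Δ'') (I \ {Δ', Δ''})

/-- The trivial partition of `Π` into singletons. -/
def trivialPartition : Set (Set G.V) := {X | ∃ R ∈ G.bigPi, X = {R}}

/-- `Ic` is a character partition of `Π`. -/
def IsCharacterPartition (Ic : Set (Set G.V)) : Prop :=
  ∃ (L : ℕ) (c : ℕ → Set (Set G.V)),
    c 0 = G.trivialPartition ∧ c L = Ic ∧
    (∀ ℓ < L, G.SourcesSeparated (c ℓ) ∧ G.IsContractionStep (c ℓ) (c (ℓ + 1))) ∧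
    ((∃ Δ ∈ Ic, ∃ i j : Fin 3, i ≠ j ∧ G.S i ∈ Δ ∧ G.S j ∈ Δ) ∨
      ∀ Δ' ∈ Ic, ∀ Δ'' ∈ Ic, Δ' ≠ Δ'' → ¬ G.ClassesConnected Δ' Δ'')

/-- Property (a): `d_{Q'} ∈ span{d_Q, ᾱ}` for all `Q, Q'` in the class `Δ`. -/
def PropertyA (F : Type) [Field F] (d : G.V → Fin 3 → F) (Δ : Set G.V) : Prop :=
  ∀ Q ∈ Δ, ∀ Q' ∈ Δ, d Q' ∈ Submodule.span F {d Q, fun _ => (1 : F)}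

end RegionGraph

/-- Condition (C-IR) for a region graph with three terminals. -/
def RegionGraph.CIR (G : RegionGraph 3) : Prop :=
  ∃ (σ τ : Equiv.Perm (Fin 3)) (P₁ P₂ : G.V),
    P₁ ∈ G.regO {G.S (σ 1), G.S (σ 2)} ∧
    P₂ ∈ G.regO {G.S (σ 0), G.S (σ 1)} ∧
    G.Lambda {τ 0} = {G.S (σ 0), P₁} ∧
    G.Lambda {τ 1} = {P₁, P₂} ∧
    G.Lambda {τ 2} ⊆ G.reg {G.S (σ 0), P₂} ∪ G.reg {G.S (σ 0), G.S (σ 2)}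



open Relation
namespace RegionGraph

section basics
variable {n : ℕ} (G : RegionGraph n)

def side (k : Fin 3) : Set G.V := G.reg {v | ∃ i, i ≠ k ∧ v = G.S i}

def inner (k : Fin 3) : Set G.V := {v | v ∈ G.side k ∧ ∀ i, v ≠ G.S i}

theorem side_eq {i j k : Fin 3} (hij : i ≠ j) (hik : i ≠ k) (hjk : j ≠ k) :
    G.side k = G.reg {G.S i, G.S j} := by
  unfold side
  congr 1
  ext v
  constructor
  · rintro ⟨l, hl, rfl⟩
    have : l = i ∨ l = j := by omega
    rcases this with rfl | rfl <;> simp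
  · rintro (rfl | rfl)
    · exact ⟨i, hik, rfl⟩
    · exact ⟨j, hjk, rfl⟩

theorem mem_bigPi {v : G.V} : v ∈ G.bigPi ↔ ∃ k, v ∈ G.side k := by
  have h2 : G.side 2 = G.regPair 0 1 := G.side_eq (by decide) (by decide) (by decide)
  have h1 : G.side 1 = G.regPair 0 2 := G.side_eq (by decide) (by decide) (by decide)
  have h0 : G.side 0 = G.regPair 1 2 := G.side_eq (by decide) (by decide) (by decide)
  simp only [bigPi, Fin.exists_fin_succ, Set.mem_union, ← h0, ← h1, ← h2]
  simp
  tauto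

theorem src_side {i k : Fin 3} (h : i ≠ k) : G.S i ∈ G.side k :=
  SuperReg.base ⟨i, h, rfl⟩

theorem src_Pi (i : Fin 3) : G.S i ∈ G.bigPi := by
  rw [mem_bigPi]
  exact ⟨i + 1, G.src_side (by omega)⟩

theorem src_of_reg {Θ : Set G.V} {i : Fin 3} (h : G.S i ∈ G.reg Θ) : G.S i ∈ Θ := by
  cases (show SuperReg G.Adj Θ (G.S i) from h) with
  | base h => exact h
  | step h _ => exact absurd h.choose_spec (G.source_no_parent _ _)

theorem src_not_side (k : Fin 3) : G.S k ∉ G.side k := by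
  intro h
  obtain ⟨i, hi, h⟩ := G.src_of_reg h
  exact hi (G.S_inj h).symm

theorem side_parent {k : Fin 3} {v p : G.V} (hv : v ∈ G.side k) (hp : G.Adj p v) :
    p ∈ G.side k := by
  cases (show SuperReg G.Adj _ v from hv) with
  | base h => obtain ⟨i, _, rfl⟩ := h; exact absurd hp (G.source_no_parent _ _)
  | step _ h => exact h p hp

theorem Pi_parent {v p : G.V} (hv : v ∈ G.bigPi) (hp : G.Adj p v) : p ∈ G.bigPi := by
  rw [mem_bigPi] at *
  obtain ⟨k, hk⟩ := hv
  exact ⟨k, G.side_parent hk hp⟩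

theorem side_inter {k l : Fin 3} (hkl : k ≠ l) {v : G.V} (hk : v ∈ G.side k)
    (hl : v ∈ G.side l) : ∃ i, v = G.S i := by
  have hk' : SuperReg G.Adj _ v := hk
  induction hk' with
  | base h => obtain ⟨i, _, rfl⟩ := h; exact ⟨i, rfl⟩
  | @step v h1 h2 ih =>
    by_contra hc
    push Not at hc
    obtain ⟨p, q, hpq, hp, hq⟩ := G.two_parents v hc
    obtain ⟨i, hi⟩ := ih p hp (h2 p hp) (G.side_parent hl hp)
    obtain ⟨j, hj⟩ := ih q hq (h2 q hq) (G.side_parent hl hq)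
    have a1 : i ≠ k := by rintro rfl; exact G.src_not_side _ (hi ▸ h2 p hp)
    have a2 : j ≠ k := by rintro rfl; exact G.src_not_side _ (hj ▸ h2 q hq)
    have a3 : i ≠ l := by rintro rfl; exact G.src_not_side _ (hi ▸ G.side_parent hl hp)
    have a4 : j ≠ l := by rintro rfl; exact G.src_not_side _ (hj ▸ G.side_parent hl hq)
    have : i = j := by omega
    subst this
    exact hpq (hi.trans hj.symm)

theorem inner_unique {k l : Fin 3} {v : G.V} (hk : v ∈ G.inner k) (hl : v ∈ G.inner l) :
    k = l := by
  by_contra h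
  obtain ⟨i, hi⟩ := G.side_inter h hk.1 hl.1
  exact hk.2 i hi

theorem side_cases {k : Fin 3} {v : G.V} (h : v ∈ G.side k) :
    (∃ i, i ≠ k ∧ v = G.S i) ∨ v ∈ G.inner k := by
  by_cases hs : ∃ i, v = G.S i
  · obtain ⟨i, rfl⟩ := hs
    left
    exact ⟨i, by rintro rfl; exact G.src_not_side _ h, rfl⟩
  · push Not at hs
    exact Or.inr ⟨h, hs⟩

theorem Pi_cases {v : G.V} (h : v ∈ G.bigPi) :
    (∃ i, v = G.S i) ∨ ∃ k, v ∈ G.inner k := by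
  rw [mem_bigPi] at h
  obtain ⟨k, hk⟩ := h
  rcases G.side_cases hk with ⟨i, _, h⟩ | h
  · exact Or.inl ⟨i, h⟩
  · exact Or.inr ⟨k, h⟩

theorem wf : WellFounded G.Adj := by
  have := G.fintypeV
  have : IsTrans G.V (TransGen G.Adj) := ⟨fun _ _ _ => TransGen.trans⟩
  have : Std.Irrefl (TransGen G.Adj) := ⟨G.acyclic⟩
  have h : WellFounded (TransGen G.Adj) := Finite.wellFounded_of_trans_of_irrefl _
  exact Subrelation.wf (fun h => TransGen.single h) h

theorem wfT : WellFounded (TransGen G.Adj) := G.wf.transGen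

theorem reach_antisymm {u v : G.V} (h : G.Reaches u v) (h' : G.Reaches v u) : u = v := by
  rcases reflTransGen_iff_eq_or_transGen.1 h with h | h
  · exact h.symm
  · exact absurd (h.trans_left h') (G.acyclic u)

/-- Elements of `reg(S_i,Q)` other than `S_i` are reachable from `Q`. -/
theorem reach_of_reg {i : Fin 3} {Q v : G.V} (h : v ∈ G.reg {G.S i, Q}) (hv : v ≠ G.S i) :
    G.Reaches Q v := by
  have h' : SuperReg G.Adj _ v := h
  induction h' with
  | @base w hw =>
    rcases hw with h | h
    · exact absurd h hv
    · rw [Set.mem_singleton_iff] at h; subst h; exact ReflTransGen.refl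
  | @step v h1 h2 ih =>
    have hs : ∀ i, v ≠ G.S i := by
      rintro i rfl; exact G.source_no_parent _ _ h1.choose_spec
    obtain ⟨p, q, hpq, hp, hq⟩ := G.two_parents v hs
    by_cases hpi : p = G.S i
    · have : q ≠ G.S i := fun h => hpq (hpi.trans h.symm)
      exact (ih q hq (h2 q hq) this).tail hq
    · exact (ih p hp (h2 p hp) hpi).tail hp

/-- Boundary of the vertices outside `Π` which reach `r`. -/
def bd (r : G.V) : Set G.V :=
  {Q | Q ∈ G.bigPi ∧ ∃ R, G.Adj Q R ∧ R ∉ G.bigPi ∧ G.Reaches R r}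

theorem bd_not_side {r : G.V} (hr : r ∉ G.bigPi) (k : Fin 3) : ¬ G.bd r ⊆ G.side k := by
  intro hs
  have key : ∀ v, G.Reaches v r → v ∈ G.bigPi := by
    intro v
    induction v using G.wf.induction with
    | _ v ih =>
      intro hv
      by_contra hP
      have hns : ∀ i, v ≠ G.S i := by rintro i rfl; exact hP (G.src_Pi i)
      obtain ⟨p, q, _, hp, _⟩ := G.two_parents v hns
      apply hP
      rw [mem_bigPi]
      refine ⟨k, SuperReg.step ⟨p, hp⟩ fun p hp => ?_⟩
      exact hs ⟨ih p hp (ReflTransGen.head hp hv), v, hp, hP, hv⟩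
  exact hr (key r ReflTransGen.refl)

end basics

section codes
variable {n : ℕ} (G : RegionGraph n) {F : Type} [Field F]

def PiCode (d : G.V → Fin 3 → F) : Prop :=
  (∀ i : Fin 3, d (G.S i) = Pi.single i 1) ∧
  ∀ v ∈ G.bigPi, (∀ i : Fin 3, v ≠ G.S i) → d v ∈ Submodule.span F (d '' {p | G.Adj p v})

theorem span_congr {d e : G.V → Fin 3 → F} {X : Set G.V} (h : ∀ v ∈ X, d v = e v) :
    Submodule.span F (d '' X) = Submodule.span F (e '' X) := by
  rw [Set.image_congr h]

open Classical in
/-- Extending a code so that a single vertex `r` receives a given vector. -/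
theorem extend_one (r : G.V) (α : Fin 3 → F) : ∀ (N : ℕ) (U : Set G.V) (d : G.V → Fin 3 → F),
    {v | v ∉ U ∧ G.Reaches v r}.ncard ≤ N →
    (∀ v ∈ U, ∀ p, G.Adj p v → p ∈ U) → r ∉ U →
    α ∈ Submodule.span F (d '' {Q | Q ∈ U ∧ ∃ R, G.Adj Q R ∧ R ∉ U ∧ G.Reaches R r}) →
    ∃ e : G.V → Fin 3 → F, (∀ v ∈ U, e v = d v) ∧
      (∀ v, v ∉ U → G.Reaches v r → e v ∈ Submodule.span F (e '' {p | G.Adj p v})) ∧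
      e r = α := by
  have := G.fintypeV
  intro N
  induction N with
  | zero =>
    intro U d hN hU hr _
    have := (Set.ncard_eq_zero (Set.toFinite _)).1 (Nat.le_zero.1 hN)
    have h : r ∈ ({v | v ∉ U ∧ G.Reaches v r} : Set G.V) := ⟨hr, ReflTransGen.refl⟩
    rw [this] at h
    exact absurd h (Set.notMem_empty _)
  | succ N ih =>
    intro U d hN hU hr hα
    obtain ⟨v, ⟨hvU, hvr⟩, hmin⟩ := G.wf.has_min {v | v ∉ U ∧ G.Reaches v r}
      ⟨r, hr, ReflTransGen.refl⟩
    have hpar : ∀ p, G.Adj p v → p ∈ U := by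
      intro p hp
      by_contra h
      exact hmin p ⟨h, ReflTransGen.head hp hvr⟩ hp
    have hup : ∀ u w, G.Reaches u w → w ∈ U → u ∈ U := by
      intro u w huw
      induction huw using ReflTransGen.head_induction_on with
      | refl => exact id
      | head h _ ih => exact fun hw => hU _ (ih hw) _ h
    by_cases hvr' : v = r
    · subst hvr'
      have hall : ∀ w, w ∉ U → G.Reaches w v → w = v := by
        intro w hw hwv
        rcases ReflTransGen.cases_tail hwv with h | ⟨c, hc, hcv⟩
        · exact h.symm
        · exact absurd (hup _ _ hc (hpar c hcv)) hw
      refine ⟨Function.update d v α, ?_, ?_, by simp⟩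
      · intro w hw
        rw [Function.update_of_ne]
        rintro rfl; exact hvU hw
      · intro w hw hwv
        have := hall w hw hwv
        subst this
        rw [Function.update_self, G.span_congr (e := d)]
        · refine Submodule.span_mono (Set.image_mono ?_) hα
          rintro Q ⟨_, R, hQR, hR, hRr⟩
          rw [hall R hR hRr] at hQR
          exact hQR
        · intro p hp
          rw [Function.update_of_ne]
          rintro rfl; exact hvU (hpar _ hp)
    · set L0 : Set G.V := {Q | Q ∈ U ∧ ∃ R, G.Adj Q R ∧ R ∉ insert v U ∧ G.Reaches R r}
      have hsub : {Q | Q ∈ U ∧ ∃ R, G.Adj Q R ∧ R ∉ U ∧ G.Reaches R r} ⊆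
          {p | G.Adj p v} ∪ L0 := by
        rintro Q ⟨hQ, R, hQR, hR, hRr⟩
        by_cases h : R = v
        · subst h; exact Or.inl hQR
        · exact Or.inr ⟨hQ, R, hQR, by simp [h, hR], hRr⟩
      have hα' := Submodule.span_mono (Set.image_mono (f := d) hsub) hα
      rw [Set.image_union, Submodule.span_union, Submodule.mem_sup] at hα'
      obtain ⟨x, hx, y, hy, hxy⟩ := hα'
      have hdU : ∀ w ∈ U, Function.update d v x w = d w := by
        intro w hw
        rw [Function.update_of_ne]
        rintro rfl; exact hvU hw
      have key : ∃ e : G.V → Fin 3 → F, (∀ w ∈ insert v U, e w = Function.update d v x w) ∧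
          (∀ w, w ∉ insert v U → G.Reaches w r → e w ∈ Submodule.span F (e '' {p | G.Adj p w})) ∧
          e r = α := by
        refine ih (insert v U) (Function.update d v x) ?_ ?_ ?_ ?_
        · have : {w | w ∉ insert v U ∧ G.Reaches w r} ⊂ {w | w ∉ U ∧ G.Reaches w r} := by
            refine ⟨fun w hw => ⟨fun h => hw.1 (Set.mem_insert_of_mem _ h), hw.2⟩, fun h => ?_⟩
            exact (h ⟨hvU, hvr⟩).1 (Set.mem_insert _ _)
          have := Set.ncard_lt_ncard this (Set.toFinite _)
          omega
        · rintro w (rfl | hw) p hp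
          · exact Set.mem_insert_of_mem _ (hpar p hp)
          · exact Set.mem_insert_of_mem _ (hU w hw p hp)
        · rintro (h | h)
          · exact hvr' h.symm
          · exact hr h
        · rw [← hxy]
          refine Submodule.add_mem _ ?_ ?_
          · apply Submodule.subset_span
            rcases ReflTransGen.cases_head hvr with h | ⟨c, hc, hcr⟩
            · exact absurd h hvr'
            · refine ⟨v, ⟨Set.mem_insert _ _, c, hc, ?_, hcr⟩, Function.update_self ..⟩
              rintro (h | h)
              · subst h; exact G.acyclic _ (TransGen.single hc)
              · exact hvU (hU _ h _ hc)
          · rw [← G.span_congr (d := Function.update d v x) (e := d) (fun w hw => hdU w hw.1)] at hy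
            refine Submodule.span_mono (Set.image_mono ?_) hy
            rintro Q ⟨hQ, R, h⟩
            exact ⟨Set.mem_insert_of_mem _ hQ, R, h⟩
      obtain ⟨e, he1, he2, he3⟩ := key
      · refine ⟨e, ?_, ?_, he3⟩
        · intro w hw
          rw [he1 w (Set.mem_insert_of_mem _ hw), hdU w hw]
        · intro w hw hwr
          by_cases hwv : w = v
          · subst hwv
            rw [he1 w (Set.mem_insert _ _), Function.update_self, G.span_congr (e := d)]
            · exact hx
            · intro p hp
              rw [he1 p (Set.mem_insert_of_mem _ (hpar p hp)), hdU p (hpar p hp)]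
          · exact he2 w (by simp [hwv, hw]) hwr

open Classical in
theorem feasible_of_roots [Fintype F] (r : Fin n → G.V) (hr : ∀ j, r j ∉ G.bigPi)
    (hrT : ∀ j, G.Reaches (r j) (G.T j))
    (hdis : ∀ i j v, v ∉ G.bigPi → G.Reaches v (r i) → G.Reaches v (r j) → r i = r j)
    (d : G.V → Fin 3 → F) (hd : G.PiCode d)
    (hsol : ∀ j, (fun _ => (1 : F)) ∈ Submodule.span F (d '' G.bd (r j))) : G.Feasible := by
  have hex : ∀ j, ∃ e : G.V → Fin 3 → F, (∀ v ∈ G.bigPi, e v = d v) ∧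
      (∀ v, v ∉ G.bigPi → G.Reaches v (r j) → e v ∈ Submodule.span F (e '' {p | G.Adj p v})) ∧
      e (r j) = fun _ => 1 := fun j =>
    G.extend_one (r j) _ _ G.bigPi d le_rfl (fun v hv p hp => G.Pi_parent hv hp) (hr j) (hsol j)
  have hex' : ∀ s : G.V, ∃ e : G.V → Fin 3 → F, ∀ j, s = r j → (∀ v ∈ G.bigPi, e v = d v) ∧
      (∀ v, v ∉ G.bigPi → G.Reaches v (r j) → e v ∈ Submodule.span F (e '' {p | G.Adj p v})) ∧
      e (r j) = fun _ => 1 := by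
    intro s
    by_cases h : ∃ j, s = r j
    · obtain ⟨j, rfl⟩ := h
      obtain ⟨e, he⟩ := hex j
      exact ⟨e, fun i hi => hi ▸ he⟩
    · exact ⟨0, fun j hj => absurd ⟨j, hj⟩ h⟩
  choose e he using hex'
  -- the global code
  have hg : ∀ v, ∃ x : Fin 3 → F, (v ∈ G.bigPi → x = d v) ∧
      (∀ j, v ∉ G.bigPi → G.Reaches v (r j) → x = e (r j) v) ∧
      (v ∉ G.bigPi → (∀ j, ¬ G.Reaches v (r j)) → (∃ j, G.Reaches (r j) v) → x = fun _ => 1) ∧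
      (v ∉ G.bigPi → (∀ j, ¬ G.Reaches v (r j)) → (¬ ∃ j, G.Reaches (r j) v) → x = 0) := by
    intro v
    by_cases h1 : v ∈ G.bigPi
    · exact ⟨d v, by simp [h1]⟩
    by_cases h2 : ∃ j, G.Reaches v (r j)
    · obtain ⟨j, hj⟩ := h2
      refine ⟨e (r j) v, by simp [h1], fun i _ hi => ?_, fun _ h => absurd hj (h j),
        fun _ h => absurd hj (h j)⟩
      rw [hdis i j v h1 hi hj]
    push Not at h2
    by_cases h3 : ∃ j, G.Reaches (r j) v
    · exact ⟨fun _ => 1, fun h => absurd h h1, fun j _ h => absurd h (h2 j), fun _ _ _ => rfl,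
        fun _ _ h => absurd h3 h⟩
    · exact ⟨0, fun h => absurd h h1, fun j _ h => absurd h (h2 j), fun _ _ h => absurd h h3,
        fun _ _ _ => rfl⟩
  choose g g1 g2 g3 g4 using hg
  have gr : ∀ j, g (r j) = fun _ => 1 := by
    intro j
    rw [g2 (r j) j (hr j) ReflTransGen.refl]
    exact (he (r j) j rfl).2.2
  have hout : ∀ j v, G.Reaches (r j) v → v ∉ G.bigPi := by
    intro j v h
    induction h with
    | refl => exact hr j
    | tail _ h ih => exact fun hP => ih (G.Pi_parent hP h)
  have gdesc : ∀ j v, G.Reaches (r j) v → g v = fun _ => 1 := by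
    intro j v h
    by_cases h2 : ∃ i, G.Reaches v (r i)
    · obtain ⟨i, hi⟩ := h2
      have e1 := hdis j i (r j) (hr j) ReflTransGen.refl (h.trans hi)
      rw [← e1] at hi
      rw [← G.reach_antisymm h hi, gr]
    · push Not at h2
      exact g3 v (hout j v h) h2 ⟨j, h⟩
  refine ⟨F, inferInstance, inferInstance, g, ⟨fun i => ?_, fun v hv => ?_⟩, fun j => ?_⟩
  · rw [g1 _ (G.src_Pi i), hd.1]
  · by_cases h1 : v ∈ G.bigPi
    · rw [g1 v h1, G.span_congr (X := {p | G.Adj p v}) (e := d)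
        (fun p hp => g1 p (G.Pi_parent h1 hp))]
      exact hd.2 v h1 hv
    by_cases h2 : ∃ j, G.Reaches v (r j)
    · obtain ⟨j, hj⟩ := h2
      rw [g2 v j h1 hj, G.span_congr (e := e (r j))]
      · exact (he (r j) j rfl).2.1 v h1 hj
      · intro p hp
        by_cases hpP : p ∈ G.bigPi
        · rw [g1 p hpP, (he (r j) j rfl).1 p hpP]
        · exact g2 p j hpP (ReflTransGen.head hp hj)
    push Not at h2
    by_cases h3 : ∃ j, G.Reaches (r j) v
    · obtain ⟨j, hj⟩ := h3
      rcases ReflTransGen.cases_tail hj with h | ⟨c, hc, hcv⟩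
      · exact absurd (h ▸ ReflTransGen.refl) (h2 j)
      · rw [gdesc j v hj, ← gdesc j c hc]
        exact Submodule.subset_span ⟨c, hcv, rfl⟩
    · rw [g4 v h1 h2 h3]
      exact Submodule.zero_mem _
  · exact gdesc j _ (hrT j)

end codes

section sidecodes
variable {n : ℕ} (G : RegionGraph n) {F : Type} [Field F]

def E (F : Type) [Field F] (i : Fin 3) : Fin 3 → F := Pi.single i 1

theorem one_eq {a b c : Fin 3} (hab : a ≠ b) (hac : a ≠ c) (hbc : b ≠ c) :
    (fun _ => (1 : F)) = E F a + E F b + E F c := by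
  funext l
  have : l = a ∨ l = b ∨ l = c := by omega
  rcases this with rfl | rfl | rfl
  · simp [E, hab, hac]
  · simp [E, hab.symm, hbc]
  · simp [E, hac.symm, hbc.symm]

def SideCode (k : Fin 3) (h : G.V → Fin 3 → F) : Prop :=
  (∀ i, i ≠ k → h (G.S i) = E F i) ∧
  ∀ v ∈ G.inner k, h v ∈ Submodule.span F (h '' {p | G.Adj p v})

theorem combine (h : Fin 3 → G.V → Fin 3 → F) (hh : ∀ k, G.SideCode k (h k)) :
    ∃ d : G.V → Fin 3 → F, G.PiCode d ∧ (∀ i, d (G.S i) = E F i) ∧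
      ∀ k, ∀ v ∈ G.inner k, d v = h k v := by
  have hx : ∀ v, ∃ x : Fin 3 → F, (∀ i, v = G.S i → x = E F i) ∧
      ∀ k, v ∈ G.inner k → x = h k v := by
    intro v
    by_cases h1 : ∃ i, v = G.S i
    · obtain ⟨i, rfl⟩ := h1
      refine ⟨E F i, fun j hj => by rw [G.S_inj hj], fun k hk => absurd rfl (hk.2 i)⟩
    · by_cases h2 : ∃ k, v ∈ G.inner k
      · obtain ⟨k, hk⟩ := h2
        exact ⟨h k v, fun i hi => absurd ⟨i, hi⟩ h1, fun l hl => by rw [G.inner_unique hk hl]⟩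
      · exact ⟨0, fun i hi => absurd ⟨i, hi⟩ h1, fun k hk => absurd ⟨k, hk⟩ h2⟩
  choose d d1 d2 using hx
  have d3 : ∀ k, ∀ v ∈ G.side k, d v = h k v := by
    intro k v hv
    rcases G.side_cases hv with ⟨i, hi, rfl⟩ | hv
    · rw [d1 _ i rfl, (hh k).1 i hi]
    · exact d2 v k hv
  refine ⟨d, ⟨fun i => d1 _ i rfl, fun v hv hs => ?_⟩, fun i => d1 _ i rfl, fun k v hv => d2 v k hv⟩
  rcases G.Pi_cases hv with ⟨i, hi⟩ | ⟨k, hk⟩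
  · exact absurd hi (hs i)
  · rw [d2 v k hk, G.span_congr (X := {p | G.Adj p v}) (e := h k)
      (fun p hp => d3 k p (G.side_parent hk.1 hp))]
    exact (hh k).2 v hk

theorem combine3 {a b c : Fin 3} (hab : a ≠ b) (hac : a ≠ c) (hbc : b ≠ c)
    {ha hb hc : G.V → Fin 3 → F} (sa : G.SideCode a ha) (sb : G.SideCode b hb)
    (sc : G.SideCode c hc) :
    ∃ d : G.V → Fin 3 → F, G.PiCode d ∧ (∀ i, d (G.S i) = E F i) ∧
      (∀ v ∈ G.inner a, d v = ha v) ∧ (∀ v ∈ G.inner b, d v = hb v) ∧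
      (∀ v ∈ G.inner c, d v = hc v) := by
  obtain ⟨d, h1, h2, h3⟩ := G.combine
    (fun k => if k = a then ha else if k = b then hb else hc) (fun k => by
      have : k = a ∨ k = b ∨ k = c := by omega
      rcases this with rfl | rfl | rfl
      · simpa using sa
      · simpa [hab.symm] using sb
      · simpa [hac.symm, hbc.symm] using sc)
  refine ⟨d, h1, h2, fun v hv => ?_, fun v hv => ?_, fun v hv => ?_⟩
  · simpa using h3 a v hv
  · simpa [hab.symm] using h3 b v hv
  · simpa [hac.symm, hbc.symm] using h3 c v hv

theorem mem_left {W : Submodule F (Fin 3 → F)} {u v : Fin 3 → F} {x y : F} (hx : x ≠ 0)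
    (h : x • u + y • v ∈ W) (hv : v ∈ W) : u ∈ W := by
  have h1 : x • u ∈ W := by
    have := W.sub_mem h (W.smul_mem y hv)
    rwa [add_sub_cancel_right] at this
  exact (W.smul_mem_iff hx).1 h1

theorem mem_of_two {W : Submodule F (Fin 3 → F)} {u v : Fin 3 → F} {x y : F} (hx : x ≠ y)
    (h : u + x • v ∈ W) (h' : u + y • v ∈ W) : u ∈ W ∧ v ∈ W := by
  have h1 : (x - y) • v ∈ W := by
    have := W.sub_mem h h'
    have e : (x - y) • v = u + x • v - (u + y • v) := by module
    rwa [e]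
  have hv : v ∈ W := (W.smul_mem_iff (sub_ne_zero.2 hx)).1 h1
  refine ⟨?_, hv⟩
  have := W.sub_mem h (W.smul_mem x hv)
  rwa [add_sub_cancel_right] at this

theorem sc_const {k i j : Fin 3} (hij : i ≠ j) (hik : i ≠ k) (hjk : j ≠ k) (x y : F) :
    ∃ h : G.V → Fin 3 → F, G.SideCode k h ∧ ∀ v ∈ G.inner k, h v = x • E F i + y • E F j := by
  classical
  let h : G.V → Fin 3 → F := fun v => if v = G.S i then E F i else if v = G.S j then E F j
    else x • E F i + y • E F j
  have hi : h (G.S i) = E F i := by simp [h]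
  have hj : h (G.S j) = E F j := by
    have : G.S j ≠ G.S i := fun e => hij (G.S_inj e).symm
    simp [h, this]
  have hin : ∀ v ∈ G.inner k, h v = x • E F i + y • E F j := by
    intro v hv
    simp [h, hv.2 i, hv.2 j]
  refine ⟨h, ⟨fun l hl => ?_, fun v hv => ?_⟩, hin⟩
  · have : l = i ∨ l = j := by omega
    rcases this with rfl | rfl <;> assumption
  · rw [hin v hv]
    by_cases hp : ∃ p, G.Adj p v ∧ p ∈ G.inner k
    · obtain ⟨p, hp, hpk⟩ := hp
      rw [← hin p hpk]
      exact Submodule.subset_span ⟨p, hp, rfl⟩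
    · push Not at hp
      have hsrc : ∀ p, G.Adj p v → p = G.S i ∨ p = G.S j := by
        intro p hpv
        rcases G.side_cases (G.side_parent hv.1 hpv) with ⟨l, hl, rfl⟩ | h
        · have : l = i ∨ l = j := by omega
          rcases this with rfl | rfl <;> simp
        · exact absurd h (hp p hpv)
      obtain ⟨p, q, hpq, hp, hq⟩ := G.two_parents v hv.2
      have : G.Adj (G.S i) v ∧ G.Adj (G.S j) v := by
        rcases hsrc p hp with rfl | rfl <;> rcases hsrc q hq with rfl | rfl
        · exact absurd rfl hpq
        · exact ⟨hp, hq⟩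
        · exact ⟨hq, hp⟩
        · exact absurd rfl hpq
      refine Submodule.add_mem _ (Submodule.smul_mem _ _ ?_) (Submodule.smul_mem _ _ ?_)
      · exact Submodule.subset_span ⟨_, this.1, hi⟩
      · exact Submodule.subset_span ⟨_, this.2, hj⟩

theorem sc_gen {k i j : Fin 3} (hij : i ≠ j) (hik : i ≠ k) (hjk : j ≠ k) (κ : G.V → F)
    (hκ : Function.Injective κ) (hκ0 : ∀ v, κ v ≠ 0) (Z : Set G.V) (hZi : G.S i ∈ Z)
    (hZj : G.S j ∉ Z)
    (hZ : ∀ v ∈ G.inner k, v ∈ Z → (∀ p, G.Adj p v → p ∈ Z) ∨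
      ∃ p q, p ≠ q ∧ G.Adj p v ∧ G.Adj q v ∧ p ∉ Z)
    (hZ' : ∀ v ∈ G.inner k, v ∉ Z → ∃ p, G.Adj p v ∧ p ∉ Z) :
    ∃ h : G.V → Fin 3 → F, G.SideCode k h ∧ (∀ v ∈ G.inner k, v ∈ Z → h v = E F i) ∧
      ∀ v ∈ G.inner k, v ∉ Z → h v = E F i + κ v • E F j := by
  classical
  let h : G.V → Fin 3 → F := fun v => if v = G.S j then E F j else if v ∈ Z then E F i
    else E F i + κ v • E F j
  have hj : h (G.S j) = E F j := by simp [h]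
  have hz : ∀ v ∈ Z, h v = E F i := by
    intro v hv
    have : v ≠ G.S j := by rintro rfl; exact hZj hv
    simp [h, this, hv]
  have hnz : ∀ v, v ∉ Z → v ≠ G.S j → h v = E F i + κ v • E F j := by
    intro v hv hv'
    simp [h, hv, hv']
  have key : ∀ (W : Submodule F (Fin 3 → F)) p q, p ≠ q → p ∉ Z → h p ∈ W → h q ∈ W →
      E F i ∈ W ∧ E F j ∈ W := by
    intro W p q hpq hp h1 h2
    by_cases hpj : p = G.S j
    · subst hpj
      rw [hj] at h1
      refine ⟨?_, h1⟩
      by_cases hq : q ∈ Z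
      · rwa [hz q hq] at h2
      · rw [hnz q hq (Ne.symm hpq)] at h2
        have := W.sub_mem h2 (W.smul_mem (κ q) h1)
        rwa [add_sub_cancel_right] at this
    · rw [hnz p hp hpj] at h1
      by_cases hqj : q = G.S j
      · subst hqj
        rw [hj] at h2
        refine ⟨?_, h2⟩
        have := W.sub_mem h1 (W.smul_mem (κ p) h2)
        rwa [add_sub_cancel_right] at this
      · by_cases hq : q ∈ Z
        · rw [hz q hq] at h2
          refine mem_of_two (hκ0 p) h1 (y := 0) ?_
          simpa using h2
        · rw [hnz q hq hqj] at h2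
          exact mem_of_two (fun e => hpq (hκ e)) h1 h2
  refine ⟨h, ⟨fun l hl => ?_, fun v hv => ?_⟩, fun v _ hv' => hz v hv', fun v hv hv' =>
    hnz v hv' (hv.2 j)⟩
  · have : l = i ∨ l = j := by omega
    rcases this with rfl | rfl
    · exact hz _ hZi
    · exact hj
  · by_cases hvZ : v ∈ Z
    · rw [hz v hvZ]
      rcases hZ v hv hvZ with hall | ⟨p, q, hpq, hp, hq, hpZ⟩
      · obtain ⟨p, _, _, hp, _⟩ := G.two_parents v hv.2
        rw [← hz p (hall p hp)]
        exact Submodule.subset_span ⟨p, hp, rfl⟩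
      · exact (key (Submodule.span F (h '' {p | G.Adj p v})) p q hpq hpZ (Submodule.subset_span ⟨p, hp, rfl⟩)
          (Submodule.subset_span ⟨q, hq, rfl⟩)).1
    · rw [hnz v hvZ (hv.2 j)]
      obtain ⟨p, hp, hpZ⟩ := hZ' v hv hvZ
      obtain ⟨q, hqp, hq⟩ : ∃ q, p ≠ q ∧ G.Adj q v := by
        obtain ⟨q, q', hqq, hq, hq'⟩ := G.two_parents v hv.2
        by_cases e : p = q
        · exact ⟨q', fun e' => hqq (e.symm.trans e'), hq'⟩
        · exact ⟨q, e, hq⟩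
      have := key (Submodule.span F (h '' {p | G.Adj p v})) p q hqp hpZ (Submodule.subset_span ⟨p, hp, rfl⟩)
          (Submodule.subset_span ⟨q, hq, rfl⟩)
      exact Submodule.add_mem _ this.1 (Submodule.smul_mem _ _ this.2)

theorem sc_inj {k i j : Fin 3} (hij : i ≠ j) (hik : i ≠ k) (hjk : j ≠ k) (κ : G.V → F)
    (hκ : Function.Injective κ) (hκ0 : ∀ v, κ v ≠ 0) :
    ∃ h : G.V → Fin 3 → F, G.SideCode k h ∧ 
      ∀ v ∈ G.inner k, h v = E F i + κ v • E F j := by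
  obtain ⟨h, h1, _, h3⟩ := G.sc_gen hij hik hjk κ hκ hκ0 {G.S i} rfl
    (fun e => hij (G.S_inj e).symm) (fun v hv hv' => absurd hv' (hv.2 i)) (fun v hv _ => by
      obtain ⟨q, q', hqq, hq, hq'⟩ := G.two_parents v hv.2
      by_cases e : q = G.S i
      · exact ⟨q', hq', fun e' => hqq (e.trans (Set.mem_singleton_iff.1 e').symm)⟩
      · exact ⟨q, hq, e⟩)
  exact ⟨h, h1, fun v hv => h3 v hv (hv.2 i)⟩

theorem sc_col {k i j : Fin 3} (hij : i ≠ j) (hik : i ≠ k) (hjk : j ≠ k) (κ : G.V → F)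
    (hκ : Function.Injective κ) (hκ0 : ∀ v, κ v ≠ 0) {Q : G.V} (hQ : Q ∈ G.inner k) :
    ∃ h : G.V → Fin 3 → F, G.SideCode k h ∧ h Q = E F i ∧
      ∀ v ∈ G.inner k, v ∉ G.reg {G.S i, Q} → h v = E F i + κ v • E F j := by
  have hQm : Q ∈ G.reg {G.S i, Q} := SuperReg.base (by simp)
  obtain ⟨h, h1, h2, h3⟩ := G.sc_gen hij hik hjk κ hκ hκ0 (G.reg {G.S i, Q})
    (SuperReg.base (by simp)) (fun e => by
      rcases G.src_of_reg e with e | e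
      · exact hij (G.S_inj e).symm
      · exact hQ.2 j e.symm) (fun v hv hv' => by
      cases (show SuperReg G.Adj _ v from hv') with
      | base e =>
        rcases e with e | e
        · exact absurd e (hv.2 i)
        · rw [Set.mem_singleton_iff] at e
          subst e
          right
          have hno : ∀ p, G.Adj p v → p ≠ G.S i → p ∉ G.reg {G.S i, v} := by
            intro p hp hpi hpr
            exact G.acyclic v (TransGen.tail' (G.reach_of_reg hpr hpi) hp)
          obtain ⟨q, q', hqq, hq, hq'⟩ := G.two_parents v hv.2
          by_cases e : q = G.S i
          · exact ⟨q', q, hqq.symm, hq', hq, hno q' hq' fun e' => hqq (e.trans e'.symm)⟩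
          · exact ⟨q, q', hqq, hq, hq', hno q hq e⟩
      | step _ hs => exact Or.inl hs) (fun v hv hv' => by
      by_contra hc
      push Not at hc
      obtain ⟨q, _, _, hq, _⟩ := G.two_parents v hv.2
      exact hv' (SuperReg.step ⟨q, hq⟩ hc))
  exact ⟨h, h1, h2 Q hQ hQm, h3⟩

/-- Existence of injective nonvanishing slopes with two prescribed values. -/
theorem exists_slope {V F : Type} [Fintype V] [Field F] [Fintype F]
    (hc : Fintype.card V + 1 ≤ Fintype.card F) {u v : V} (huv : u ≠ v) {x y : F} (hx : x ≠ 0)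
    (hy : y ≠ 0) (hxy : x ≠ y) :
    ∃ κ : V → F, Function.Injective κ ∧ (∀ w, κ w ≠ 0) ∧ κ u = x ∧ κ v = y := by
  classical
  have hcu : Fintype.card V ≤ Fintype.card Fˣ := by
    rw [Fintype.card_units]; omega
  obtain ⟨g⟩ := Function.Embedding.nonempty_of_card_le hcu
  let x' := Units.mk0 x hx
  let y' := Units.mk0 y hy
  have hxy' : x' ≠ y' := fun e => hxy (congrArg Units.val e)
  let z := Equiv.swap (g u) x' (g v)
  have hz : z ≠ x' := by
    intro e
    have : Equiv.swap (g u) x' (g v) = Equiv.swap (g u) x' (g u) := by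
      rw [Equiv.swap_apply_left]; exact e
    exact huv (g.injective ((Equiv.injective _ this).symm))
  refine ⟨fun w => ((Equiv.swap z y' (Equiv.swap (g u) x' (g w)) : Fˣ) : F), ?_, ?_, ?_, ?_⟩
  · intro a b hab
    exact g.injective (Equiv.injective _ (Equiv.injective _ (Units.val_injective hab)))
  · intro w; exact Units.ne_zero _
  · simp only [Equiv.swap_apply_left]
    rw [Equiv.swap_apply_of_ne_of_ne hz.symm hxy']
    rfl
  · show ((Equiv.swap z y' z : Fˣ) : F) = y
    rw [Equiv.swap_apply_left]
    rfl

end sidecodes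

section main
variable {n : ℕ} (G : RegionGraph n) {F : Type} [Field F]

def Sol (F : Type) [Field F] (L1 L2 L3 : Set G.V) : Prop :=
  ∃ d : G.V → Fin 3 → F, G.PiCode d ∧ (fun _ => (1 : F)) ∈ Submodule.span F (d '' L1) ∧
    (fun _ => (1 : F)) ∈ Submodule.span F (d '' L2) ∧
    (fun _ => (1 : F)) ∈ Submodule.span F (d '' L3)

theorem mem_sp {d : G.V → Fin 3 → F} {L : Set G.V} {v : G.V} {x : Fin 3 → F} (hv : v ∈ L)
    (h : d v = x) : x ∈ Submodule.span F (d '' L) :=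
  Submodule.subset_span ⟨v, hv, h⟩

theorem mem_comb {W : Submodule F (Fin 3 → F)} {u v t : Fin 3 → F} (x y : F) (hu : u ∈ W)
    (hv : v ∈ W) (h : t = x • u + y • v) : t ∈ W := by
  rw [h]; exact W.add_mem (W.smul_mem x hu) (W.smul_mem y hv)

theorem mem_sum3 {a b c : Fin 3} (hab : a ≠ b) (hac : a ≠ c) (hbc : b ≠ c)
    {W : Submodule F (Fin 3 → F)} (h1 : E F a ∈ W) (h2 : E F b ∈ W) (h3 : E F c ∈ W) :
    (fun _ => (1 : F)) ∈ W := by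
  rw [one_eq hab hac hbc]
  exact W.add_mem (W.add_mem h1 h2) h3

theorem main_case [Fintype F] [Fintype G.V] (hF2 : (2 : F) ≠ 0)
    (hcard : Fintype.card G.V + 1 ≤ Fintype.card F)
    {a b c : Fin 3} (hab : a ≠ b) (hac : a ≠ c) (hbc : b ≠ c) {L1 L2 L3 : Set G.V}
    (h1a : G.S a ∈ L1) (h1 : ∀ v ∈ L1, v = G.S a ∨ v ∈ G.inner a)
    (h1X : ∃ P ∈ L1, P ∈ G.inner a)
    (h2 : ∀ v ∈ L2, v ∈ G.inner a ∨ v ∈ G.inner c)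
    (h2A : ∃ Q ∈ L2, Q ∈ G.inner c) (h2B : ∃ R ∈ L2, R ∈ G.inner a)
    (h3P : L3 ⊆ G.bigPi) (h3 : ∀ k, ¬ L3 ⊆ G.side k)
    (nc1 : ¬ ∃ R Q, R ∈ G.inner a ∧ Q ∈ G.inner c ∧ L1 = {G.S a, R} ∧ L2 = {R, Q} ∧
      L3 ⊆ G.reg {G.S a, Q} ∪ G.reg {G.S a, G.S c})
    (nc2 : ¬ ∃ R Q, R ∈ G.inner a ∧ Q ∈ G.inner c ∧ L3 = {G.S c, Q} ∧ L2 = {Q, R} ∧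
      L1 ⊆ G.reg {G.S c, R} ∪ G.reg {G.S c, G.S a}) : G.Sol F L1 L2 L3 := by
  have one := one_eq (F := F) hab hac hbc
  have sum3 : ∀ {W : Submodule F (Fin 3 → F)}, _ := fun {W} => mem_sum3 (W := W) hab hac hbc
  obtain ⟨P, hP1, hPa⟩ := h1X
  obtain ⟨Q, hQ2, hQc⟩ := h2A
  obtain ⟨R, hR2, hRa⟩ := h2B
  have hPi : ∀ v ∈ L3, (v = G.S a ∨ v = G.S b ∨ v = G.S c) ∨
      v ∈ G.inner a ∨ v ∈ G.inner b ∨ v ∈ G.inner c := by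
    intro v hv
    rcases G.Pi_cases (h3P hv) with ⟨i, hi⟩ | ⟨k, hk⟩
    · have : i = a ∨ i = b ∨ i = c := by omega
      rcases this with rfl | rfl | rfl <;> simp [hi]
    · have : k = a ∨ k = b ∨ k = c := by omega
      rcases this with rfl | rfl | rfl <;> simp [hk]
  have ssub : ∀ k, ∃ v ∈ L3, v ∉ G.side k := fun k => Set.not_subset.1 (h3 k)
  have hne1 : (1 : F) ≠ 2 := fun e => one_ne_zero (α := F) (by linear_combination (-1 : F) * e)
  have hne2 : (1 : F) ≠ -1 := fun e => hF2 (by linear_combination e)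
  have hn1 : (-1 : F) ≠ 0 := neg_ne_zero.2 one_ne_zero
  obtain ⟨amid, amid1, amid2⟩ := G.sc_const (F := F) (k := a) hbc hab.symm hac.symm 1 1
  obtain ⟨cmid, cmid1, cmid2⟩ := G.sc_const (F := F) (k := c) hab hac hbc 1 1
  obtain ⟨bC, bC1, bC2⟩ := G.sc_const (F := F) (k := b) hac hab hbc.symm 0 1
  obtain ⟨cA, cA1, cA2⟩ := G.sc_const (F := F) (k := c) hab hac hbc 1 0
  -- case alpha 1
  by_cases hα1 : G.S b ∈ L3
  · obtain ⟨bm, bm1, bm2⟩ := G.sc_const (F := F) (k := b) hac hab hbc.symm 1 1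
    obtain ⟨d, d1, dS, da, db, dc⟩ := G.combine3 hab hac hbc amid1 bm1 cA1
    refine ⟨d, d1, ?_, ?_, ?_⟩
    · refine mem_comb 1 1 (G.mem_sp h1a (dS a)) (G.mem_sp hP1 ((da P hPa).trans (amid2 P hPa))) ?_
      rw [one]; module
    · refine mem_comb 1 1 (G.mem_sp hQ2 ((dc Q hQc).trans (cA2 Q hQc)))
        (G.mem_sp hR2 ((da R hRa).trans (amid2 R hRa))) ?_
      rw [one]; module
    · have eb := G.mem_sp hα1 (dS b)
      by_cases hZ : ∃ Z ∈ L3, Z ∈ G.inner b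
      · obtain ⟨Z, hZ, hZb⟩ := hZ
        refine mem_comb 1 1 eb (G.mem_sp hZ ((db Z hZb).trans (bm2 Z hZb))) ?_
        rw [one]; module
      · have ec : E F c ∈ Submodule.span F (d '' L3) := by
          obtain ⟨v, hv, hvn⟩ := ssub c
          rcases hPi v hv with (e | e | e) | e | e | e
          · exact absurd (e ▸ G.src_side hac) hvn
          · exact absurd (e ▸ G.src_side hbc) hvn
          · exact G.mem_sp hv (e ▸ dS c)
          · refine mem_comb 1 (-1) (G.mem_sp hv ((da v e).trans (amid2 v e))) eb ?_
            module
          · exact absurd ⟨v, hv, e⟩ hZ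
          · exact absurd e.1 hvn
        have ea : E F a ∈ Submodule.span F (d '' L3) := by
          obtain ⟨v, hv, hvn⟩ := ssub a
          rcases hPi v hv with (e | e | e) | e | e | e
          · exact G.mem_sp hv (e ▸ dS a)
          · exact absurd (e ▸ G.src_side hab.symm) hvn
          · exact absurd (e ▸ G.src_side hac.symm) hvn
          · exact absurd e.1 hvn
          · exact absurd ⟨v, hv, e⟩ hZ
          · have := G.mem_sp hv ((dc v e).trans (cA2 v e))
            simpa using this
        exact sum3 ea eb ec
  -- case alpha 2
  by_cases hα2 : ∃ P' ∈ L3, P' ∈ G.inner a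
  · obtain ⟨P', hP', hP'a⟩ := hα2
    obtain ⟨bm, bm1, bm2⟩ := G.sc_const (F := F) (k := b) hac hab hbc.symm 1 0
    obtain ⟨d, d1, dS, da, db, dc⟩ := G.combine3 hab hac hbc amid1 bm1 cA1
    refine ⟨d, d1, ?_, ?_, ?_⟩
    · refine mem_comb 1 1 (G.mem_sp h1a (dS a)) (G.mem_sp hP1 ((da P hPa).trans (amid2 P hPa))) ?_
      rw [one]; module
    · refine mem_comb 1 1 (G.mem_sp hQ2 ((dc Q hQc).trans (cA2 Q hQc)))
        (G.mem_sp hR2 ((da R hRa).trans (amid2 R hRa))) ?_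
      rw [one]; module
    · have ea : E F a ∈ Submodule.span F (d '' L3) := by
        obtain ⟨v, hv, hvn⟩ := ssub a
        rcases hPi v hv with (e | e | e) | e | e | e
        · exact G.mem_sp hv (e ▸ dS a)
        · exact absurd (e ▸ G.src_side hab.symm) hvn
        · exact absurd (e ▸ G.src_side hac.symm) hvn
        · exact absurd e.1 hvn
        · have := G.mem_sp hv ((db v e).trans (bm2 v e))
          simpa using this
        · have := G.mem_sp hv ((dc v e).trans (cA2 v e))
          simpa using this
      refine mem_comb 1 1 ea (G.mem_sp hP' ((da P' hP'a).trans (amid2 P' hP'a))) ?_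
      rw [one]; module
  -- case beta
  push Not at hα2
  obtain ⟨Y, hY3, hYc⟩ : ∃ Y ∈ L3, Y ∈ G.inner c := by
    obtain ⟨v, hv, hvn⟩ := ssub b
    rcases hPi v hv with (e | e | e) | e | e | e
    · exact absurd (e ▸ G.src_side hab) hvn
    · exact absurd (e ▸ hv) hα1
    · exact absurd (e ▸ G.src_side hbc.symm) hvn
    · exact absurd e (hα2 v hv)
    · exact absurd e.1 hvn
    · exact ⟨v, hv, e⟩
  obtain ⟨Z, hZ3, hZ⟩ : ∃ Z ∈ L3, Z = G.S c ∨ Z ∈ G.inner b := by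
    obtain ⟨v, hv, hvn⟩ := ssub c
    rcases hPi v hv with (e | e | e) | e | e | e
    · exact absurd (e ▸ G.src_side hac) hvn
    · exact absurd (e ▸ hv) hα1
    · exact ⟨v, hv, Or.inl e⟩
    · exact absurd e (hα2 v hv)
    · exact ⟨v, hv, Or.inr e⟩
    · exact absurd e.1 hvn
  have hZc : ∀ d : G.V → Fin 3 → F, (∀ i, d (G.S i) = E F i) → (∀ v ∈ G.inner b, d v = bC v) →
      E F c ∈ Submodule.span F (d '' L3) := by
    intro d dS db
    rcases hZ with e | e
    · exact G.mem_sp hZ3 (e ▸ dS c)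
    · have := G.mem_sp hZ3 ((db Z e).trans (bC2 Z e))
      simpa using this
  have slope : ∀ {u v : G.V} {x y : F}, u ≠ v → x ≠ 0 → y ≠ 0 → x ≠ y →
      ∃ κ : G.V → F, Function.Injective κ ∧ (∀ w, κ w ≠ 0) ∧ κ u = x ∧ κ v = y :=
    fun huv hx hy hxy => exists_slope hcard huv hx hy hxy
  have slope1 : ∀ u : G.V, ∃ κ : G.V → F, Function.Injective κ ∧ (∀ w, κ w ≠ 0) ∧ κ u = 1 := by
    intro u
    have : ∃ v, u ≠ v := by
      by_cases e : u = G.S a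
      · exact ⟨G.S b, fun e' => hab (G.S_inj (e.symm.trans e'))⟩
      · exact ⟨_, e⟩
    obtain ⟨v, hv⟩ := this
    obtain ⟨κ, k1, k2, k3, _⟩ := slope hv one_ne_zero hF2 hne1
    exact ⟨κ, k1, k2, k3⟩
  -- beta 1
  by_cases hβ1 : ∃ Q' ∈ L2, Q' ∈ G.inner c ∧ ∃ Y' ∈ L3, Y' ∈ G.inner c ∧ Y' ∉ G.reg {G.S a, Q'}
  · obtain ⟨Q, hQ2, hQc, Y, hY3, hYc, hYQ⟩ := hβ1
    obtain ⟨κ, k1, k2, k3⟩ := slope1 Y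
    obtain ⟨hc, hc1, hc2, hc3⟩ := G.sc_col hab hac hbc κ k1 k2 hQc
    obtain ⟨d, d1, dS, da, db, dc⟩ := G.combine3 hab hac hbc amid1 bC1 hc1
    refine ⟨d, d1, ?_, ?_, ?_⟩
    · refine mem_comb 1 1 (G.mem_sp h1a (dS a)) (G.mem_sp hP1 ((da P hPa).trans (amid2 P hPa))) ?_
      rw [one]; module
    · refine mem_comb 1 1 (G.mem_sp hQ2 ((dc Q hQc).trans hc2))
        (G.mem_sp hR2 ((da R hRa).trans (amid2 R hRa))) ?_
      rw [one]; module
    · refine mem_comb 1 1 (G.mem_sp hY3 ((dc Y hYc).trans (hc3 Y hYc hYQ))) (hZc d dS db) ?_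
      rw [one, k3]; module
  -- beta 2
  by_cases hβ2 : ∃ Q' ∈ L2, Q' ∈ G.inner c ∧ Q ≠ Q'
  · obtain ⟨Q', hQ'2, hQ'c, hQQ⟩ := hβ2
    obtain ⟨κ, k1, k2, k3⟩ := slope1 Y
    obtain ⟨hc, hc1, hc2⟩ := G.sc_inj hab hac hbc κ k1 k2
    obtain ⟨d, d1, dS, da, db, dc⟩ := G.combine3 hab hac hbc amid1 bC1 hc1
    refine ⟨d, d1, ?_, ?_, ?_⟩
    · refine mem_comb 1 1 (G.mem_sp h1a (dS a)) (G.mem_sp hP1 ((da P hPa).trans (amid2 P hPa))) ?_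
      rw [one]; module
    · obtain ⟨ea, eb⟩ := mem_of_two (fun e => hQQ (k1 e))
        (G.mem_sp hQ2 ((dc Q hQc).trans (hc2 Q hQc)))
        (G.mem_sp hQ'2 ((dc Q' hQ'c).trans (hc2 Q' hQ'c)))
      refine mem_comb 1 1 ea (G.mem_sp hR2 ((da R hRa).trans (amid2 R hRa))) ?_
      rw [one]; module
    · refine mem_comb 1 1 (G.mem_sp hY3 ((dc Y hYc).trans (hc2 Y hYc))) (hZc d dS db) ?_
      rw [one, k3]; module
  -- beta 3
  by_cases hβ3 : ∃ R' ∈ L2, R' ∈ G.inner a ∧ R ≠ R'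
  · obtain ⟨R', hR'2, hR'a, hRR⟩ := hβ3
    obtain ⟨κ, k1, k2, k3⟩ := slope1 P
    obtain ⟨ha, ha1, ha2⟩ := G.sc_inj (k := a) hbc hab.symm hac.symm κ k1 k2
    obtain ⟨d, d1, dS, da, db, dc⟩ := G.combine3 hab hac hbc ha1 bC1 cmid1
    refine ⟨d, d1, ?_, ?_, ?_⟩
    · refine mem_comb 1 1 (G.mem_sp h1a (dS a)) (G.mem_sp hP1 ((da P hPa).trans (ha2 P hPa))) ?_
      rw [one, k3]; module
    · obtain ⟨eb, ec⟩ := mem_of_two (fun e => hRR (k1 e))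
        (G.mem_sp hR2 ((da R hRa).trans (ha2 R hRa)))
        (G.mem_sp hR'2 ((da R' hR'a).trans (ha2 R' hR'a)))
      refine mem_comb 1 1 (G.mem_sp hQ2 ((dc Q hQc).trans (cmid2 Q hQc))) ec ?_
      rw [one]; module
    · refine mem_comb 1 1 (G.mem_sp hY3 ((dc Y hYc).trans (cmid2 Y hYc))) (hZc d dS db) ?_
      rw [one]; module
  push Not at hβ1 hβ2 hβ3
  have hL2 : L2 = {R, Q} := by
    ext v
    constructor
    · intro hv
      rcases h2 v hv with e | e
      · exact Or.inl (hβ3 v hv e).symm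
      · exact Or.inr (hβ2 v hv e).symm
    · rintro (rfl | e)
      · exact hR2
      · rw [Set.mem_singleton_iff] at e; rwa [e]
  -- beta 5
  by_cases hβ5 : ∃ P ∈ L1, P ∈ G.inner a ∧ P ≠ R
  swap
  · push Not at hβ5
    exfalso
    apply nc1
    refine ⟨R, Q, hRa, hQc, ?_, hL2, ?_⟩
    · ext v
      constructor
      · intro hv
        rcases h1 v hv with e | e
        · exact Or.inl e
        · exact Or.inr (hβ5 v hv e)
      · rintro (rfl | e)
        · exact h1a
        · rw [Set.mem_singleton_iff] at e
          rw [e, ← hβ5 P hP1 hPa]; exact hP1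
    · intro v hv
      rw [← G.side_eq hac hab hbc.symm]
      rcases hPi v hv with (e | e | e) | e | e | e
      · exact Or.inr (e ▸ G.src_side hab)
      · exact absurd (e ▸ hv) hα1
      · exact Or.inr (e ▸ G.src_side hbc.symm)
      · exact absurd e (hα2 v hv)
      · exact Or.inr e.1
      · exact Or.inl (hβ1 Q hQ2 hQc v hv e)
  -- beta 4
  obtain ⟨P, hP1, hPa, hPR⟩ := hβ5
  obtain ⟨κ, k1, k2, k3, k4⟩ := slope hPR one_ne_zero hn1 hne2
  obtain ⟨ha, ha1, ha2⟩ := G.sc_inj (k := a) hbc hab.symm hac.symm κ k1 k2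
  by_cases hYQ : ∃ Y ∈ L3, Y ∈ G.inner c ∧ Y ≠ Q
  · obtain ⟨Y, hY3, hYc, hYQ⟩ := hYQ
    obtain ⟨μ, m1, m2, m3, m4⟩ := slope hYQ one_ne_zero hF2 hne1
    obtain ⟨hc, hc1, hc2⟩ := G.sc_inj hab hac hbc μ m1 m2
    obtain ⟨d, d1, dS, da, db, dc⟩ := G.combine3 hab hac hbc ha1 bC1 hc1
    refine ⟨d, d1, ?_, ?_, ?_⟩
    · refine mem_comb 1 1 (G.mem_sp h1a (dS a)) (G.mem_sp hP1 ((da P hPa).trans (ha2 P hPa))) ?_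
      rw [one, k3]; module
    · refine mem_comb 1 (-1) (G.mem_sp hQ2 ((dc Q hQc).trans (hc2 Q hQc)))
        (G.mem_sp hR2 ((da R hRa).trans (ha2 R hRa))) ?_
      rw [one, k4, m4]; module
    · refine mem_comb 1 1 (G.mem_sp hY3 ((dc Y hYc).trans (hc2 Y hYc))) (hZc d dS db) ?_
      rw [one, m3]; module
  push Not at hYQ
  have hQ3 : Q ∈ L3 := hYQ Y hY3 hYc ▸ hY3
  by_cases hSa : G.S a ∈ L3
  · obtain ⟨hc, hc1, hc2⟩ := G.sc_const (F := F) (k := c) hab hac hbc 1 2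
    obtain ⟨d, d1, dS, da, db, dc⟩ := G.combine3 hab hac hbc ha1 bC1 hc1
    refine ⟨d, d1, ?_, ?_, ?_⟩
    · refine mem_comb 1 1 (G.mem_sp h1a (dS a)) (G.mem_sp hP1 ((da P hPa).trans (ha2 P hPa))) ?_
      rw [one, k3]; module
    · refine mem_comb 1 (-1) (G.mem_sp hQ2 ((dc Q hQc).trans (hc2 Q hQc)))
        (G.mem_sp hR2 ((da R hRa).trans (ha2 R hRa))) ?_
      rw [one, k4]; module
    · have ea := G.mem_sp hSa (dS a)
      have hq := G.mem_sp hQ3 ((dc Q hQc).trans (hc2 Q hQc))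
      rw [add_comm] at hq
      exact sum3 ea (mem_left hF2 hq ea) (hZc d dS db)
  by_cases hZb : ∃ Z ∈ L3, Z ∈ G.inner b
  · obtain ⟨Z, hZ3, hZb⟩ := hZb
    obtain ⟨hc, hc1, hc2⟩ := G.sc_const (F := F) (k := c) hab hac hbc 1 2
    obtain ⟨hb, hb1, hb2⟩ := G.sc_const (F := F) (k := b) hac hab hbc.symm 1 2
    obtain ⟨d, d1, dS, da, db, dc⟩ := G.combine3 hab hac hbc ha1 hb1 hc1
    refine ⟨d, d1, ?_, ?_, ?_⟩
    · refine mem_comb 1 1 (G.mem_sp h1a (dS a)) (G.mem_sp hP1 ((da P hPa).trans (ha2 P hPa))) ?_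
      rw [one, k3]; module
    · refine mem_comb 1 (-1) (G.mem_sp hQ2 ((dc Q hQc).trans (hc2 Q hQc)))
        (G.mem_sp hR2 ((da R hRa).trans (ha2 R hRa))) ?_
      rw [one, k4]; module
    · refine ((Submodule.span F (d '' L3)).smul_mem_iff hF2).1 ?_
      refine mem_comb 1 1 (G.mem_sp hQ3 ((dc Q hQc).trans (hc2 Q hQc)))
        (G.mem_sp hZ3 ((db Z hZb).trans (hb2 Z hZb))) ?_
      rw [one]; module
  push Not at hZb
  have hSc : G.S c ∈ L3 := by
    rcases hZ with e | e
    · exact e ▸ hZ3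
    · exact absurd e (hZb Z hZ3)
  by_cases hX : ∃ P ∈ L1, P ∈ G.inner a ∧ P ∉ G.reg {G.S c, R}
  · obtain ⟨P, hP1, hPa, hPR⟩ := hX
    obtain ⟨ν, n1, n2, n3⟩ := slope1 P
    obtain ⟨ha, ha1, ha2, ha3⟩ := G.sc_col (k := a) hbc.symm hac.symm hab.symm ν n1 n2 hRa
    obtain ⟨d, d1, dS, da, db, dc⟩ := G.combine3 hab hac hbc ha1 bC1 cmid1
    refine ⟨d, d1, ?_, ?_, ?_⟩
    · refine mem_comb 1 1 (G.mem_sp h1a (dS a))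
        (G.mem_sp hP1 ((da P hPa).trans (ha3 P hPa hPR))) ?_
      rw [one, n3]; module
    · refine mem_comb 1 1 (G.mem_sp hQ2 ((dc Q hQc).trans (cmid2 Q hQc)))
        (G.mem_sp hR2 ((da R hRa).trans ha2)) ?_
      rw [one]; module
    · refine mem_comb 1 1 (G.mem_sp hQ3 ((dc Q hQc).trans (cmid2 Q hQc)))
        (G.mem_sp hSc (dS c)) ?_
      rw [one]; module
  · push Not at hX
    exfalso
    apply nc2
    refine ⟨R, Q, hRa, hQc, ?_, by rw [hL2, Set.pair_comm], ?_⟩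
    · ext v
      constructor
      · intro hv
        rcases hPi v hv with (e | e | e) | e | e | e
        · exact absurd (e ▸ hv) hSa
        · exact absurd (e ▸ hv) hα1
        · exact Or.inl e
        · exact absurd e (hα2 v hv)
        · exact absurd e (hZb v hv)
        · exact Or.inr (hYQ v hv e)
      · rintro (rfl | e)
        · exact hSc
        · rw [Set.mem_singleton_iff] at e; rwa [e]
    · intro v hv
      rcases h1 v hv with e | e
      · right; rw [e]; exact SuperReg.base (by simp)
      · exact Or.inl (hX v hv e)

end main

section core
variable {n : ℕ} (G : RegionGraph n) {F : Type} [Field F]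

def Star (a : Fin 3) (L : Set G.V) : Prop :=
  G.S a ∈ L ∧ (∀ v ∈ L, v = G.S a ∨ v ∈ G.inner a) ∧ ∃ P ∈ L, P ∈ G.inner a

def Vee (m : Fin 3) (L : Set G.V) : Prop :=
  (∀ v ∈ L, ∃ k, k ≠ m ∧ v ∈ G.inner k) ∧ ∀ k, k ≠ m → ∃ v ∈ L, v ∈ G.inner k

theorem w_form {w : Fin 3 → F} {i j k : Fin 3} (hij : i ≠ j) (hik : i ≠ k) (hjk : j ≠ k)
    (h0 : w k = 0) : w = w i • E F i + w j • E F j := by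
  funext l
  have : l = i ∨ l = j ∨ l = k := by omega
  rcases this with rfl | rfl | rfl <;> simp [E, *, Ne.symm]

theorem third (i l : Fin 3) : ∃ j : Fin 3, j ≠ i ∧ j ≠ l := by
  revert i l; decide

theorem const_code {w : Fin 3 → Fin 3 → F} (h0 : ∀ k, w k k = 0) :
    ∃ d : G.V → Fin 3 → F, G.PiCode d ∧ (∀ i, d (G.S i) = E F i) ∧
      ∀ k, ∀ v ∈ G.inner k, d v = w k := by
  have key : ∀ i j k : Fin 3, i ≠ j → i ≠ k → j ≠ k →
      ∃ h : G.V → Fin 3 → F, G.SideCode k h ∧ ∀ v ∈ G.inner k, h v = w k := by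
    intro i j k hij hik hjk
    obtain ⟨h, h1, h2⟩ := G.sc_const (F := F) hij hik hjk (w k i) (w k j)
    exact ⟨h, h1, fun v hv => (h2 v hv).trans (w_form hij hik hjk (h0 k)).symm⟩
  obtain ⟨h0, a0, b0⟩ := key 1 2 0 (by decide) (by decide) (by decide)
  obtain ⟨h1, a1, b1⟩ := key 0 2 1 (by decide) (by decide) (by decide)
  obtain ⟨h2, a2, b2⟩ := key 0 1 2 (by decide) (by decide) (by decide)
  obtain ⟨d, d1, dS, d0, d1', d2⟩ := G.combine3 (by decide : (0 : Fin 3) ≠ 1)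
    (by decide : (0 : Fin 3) ≠ 2) (by decide : (1 : Fin 3) ≠ 2) a0 a1 a2
  refine ⟨d, d1, dS, fun k v hv => ?_⟩
  have : k = 0 ∨ k = 1 ∨ k = 2 := by omega
  rcases this with rfl | rfl | rfl
  · rw [d0 v hv, b0 v hv]
  · rw [d1' v hv, b1 v hv]
  · rw [d2 v hv, b2 v hv]

theorem const_ok {w : Fin 3 → Fin 3 → F} (h0 : ∀ k, w k k = 0) (hne : ∀ k i, i ≠ k → w k i ≠ 0)
    {d : G.V → Fin 3 → F} (dS : ∀ i, d (G.S i) = E F i)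
    (dI : ∀ k, ∀ v ∈ G.inner k, d v = w k) {L : Set G.V} (hL : L ⊆ G.bigPi)
    (hs : ∀ k, ¬ L ⊆ G.side k)
    (hdet : ∀ W : Submodule F (Fin 3 → F), (∀ k, w k ∈ W) → (fun _ => (1 : F)) ∈ W)
    (hstar : ∀ a, G.Star a L → ∀ W : Submodule F (Fin 3 → F), E F a ∈ W → w a ∈ W →
      (fun _ => (1 : F)) ∈ W)
    (hvee : ∀ m, G.Vee m L → ∀ W : Submodule F (Fin 3 → F), (∀ k, k ≠ m → w k ∈ W) →
      (fun _ => (1 : F)) ∈ W) :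
    (fun _ => (1 : F)) ∈ Submodule.span F (d '' L) := by
  have hI : ∀ k, ∀ v ∈ L, v ∈ G.inner k → w k ∈ Submodule.span F (d '' L) :=
    fun k v hv hk => G.mem_sp hv (dI k v hk)
  have hS : ∀ k, G.S k ∈ L → E F k ∈ Submodule.span F (d '' L) :=
    fun k hv => G.mem_sp hv (dS k)
  generalize Submodule.span F (d '' L) = W at hI hS ⊢
  have step : ∀ i j k : Fin 3, i ≠ j → i ≠ k → j ≠ k → E F i ∈ W → w j ∈ W → E F k ∈ W := by
    intro i j k hij hik hjk hi hj
    rw [w_form hik.symm hjk.symm hij (h0 j)] at hj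
    exact mem_left (hne j k hjk.symm) hj hi
  have fin2 : ∀ i j k : Fin 3, i ≠ j → i ≠ k → j ≠ k → E F i ∈ W → E F k ∈ W →
      (fun _ => (1 : F)) ∈ W := by
    intro i j k hij hik hjk hi hk
    refine mem_sum3 hij hik hjk hi ?_ hk
    obtain ⟨v, hv, hvj⟩ := Set.not_subset.1 (hs j)
    rcases G.Pi_cases (hL hv) with ⟨l, rfl⟩ | ⟨l, hl⟩
    · have : l = j := by
        by_contra hc
        exact hvj (G.src_side hc)
      subst this
      exact hS _ hv
    · have : l = i ∨ l = j ∨ l = k := by omega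
      rcases this with rfl | rfl | rfl
      · exact step k l j hik.symm hjk.symm hij hk (hI _ v hv hl)
      · exact absurd hl.1 hvj
      · exact step i l j hik hij hjk.symm hi (hI _ v hv hl)
  by_cases hsrc : ∃ i, G.S i ∈ L
  · obtain ⟨i, hi⟩ := hsrc
    by_cases hall : ∀ v ∈ L, v = G.S i ∨ v ∈ G.inner i
    · have : ∃ P ∈ L, P ∈ G.inner i := by
        obtain ⟨v, hv, hvj⟩ := Set.not_subset.1 (hs (i + 1))
        rcases hall v hv with rfl | h
        · exact absurd (G.src_side (by omega)) hvj
        · exact ⟨v, hv, h⟩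
      obtain ⟨P, hP, hPi⟩ := this
      exact hstar i ⟨hi, hall, P, hP, hPi⟩ W (hS i hi) (hI i P hP hPi)
    · push Not at hall
      obtain ⟨v, hv, h1, h2⟩ := hall
      rcases G.Pi_cases (hL hv) with ⟨l, rfl⟩ | ⟨l, hl⟩
      · have hil : i ≠ l := fun e => h1 (e ▸ rfl)
        obtain ⟨j, hj1, hj2⟩ : ∃ j : Fin 3, j ≠ i ∧ j ≠ l := third _ _
        exact fin2 i j l hj1.symm hil hj2 (hS _ hi) (hS _ hv)
      · have hil : i ≠ l := fun e => h2 (e ▸ hl)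
        obtain ⟨j, hj1, hj2⟩ : ∃ j : Fin 3, j ≠ i ∧ j ≠ l := third _ _
        exact fin2 i l j hil hj1.symm hj2.symm (hS _ hi)
          (step i l j hil hj1.symm hj2.symm (hS _ hi) (hI _ v hv hl))
  · push Not at hsrc
    have hin : ∀ v ∈ L, ∃ k, v ∈ G.inner k := by
      intro v hv
      rcases G.Pi_cases (hL hv) with ⟨l, rfl⟩ | h
      · exact absurd hv (hsrc l)
      · exact h
    by_cases hhit : ∀ k, ∃ v ∈ L, v ∈ G.inner k
    · refine hdet W fun k => ?_
      obtain ⟨v, hv, hk⟩ := hhit k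
      exact hI k v hv hk
    · push Not at hhit
      obtain ⟨m, hm⟩ := hhit
      have hv2 : G.Vee m L := by
        refine ⟨fun v hv => ?_, fun k hk => ?_⟩
        · obtain ⟨k, hk⟩ := hin v hv
          exact ⟨k, fun e => hm v hv (e ▸ hk), hk⟩
        · obtain ⟨j, hj1, hj2⟩ : ∃ j : Fin 3, j ≠ k ∧ j ≠ m := third _ _
          obtain ⟨v, hv, hvj⟩ := Set.not_subset.1 (hs j)
          obtain ⟨l, hl⟩ := hin v hv
          have h1 : l ≠ m := fun e => hm v hv (e ▸ hl)
          have h2 : l ≠ j := fun e => hvj (e ▸ hl.1)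
          have : l = k := by omega
          exact ⟨v, hv, this ▸ hl⟩
      refine hvee m hv2 W fun k hk => ?_
      obtain ⟨v, hv, hvk⟩ := hv2.2 k hk
      exact hI k v hv hvk

def CIRset (G : RegionGraph n) (L : Fin 3 → Set G.V) : Prop :=
  ∃ (σ τ : Equiv.Perm (Fin 3)) (P₁ P₂ : G.V),
    P₁ ∈ G.regO {G.S (σ 1), G.S (σ 2)} ∧
    P₂ ∈ G.regO {G.S (σ 0), G.S (σ 1)} ∧
    L (τ 0) = {G.S (σ 0), P₁} ∧
    L (τ 1) = {P₁, P₂} ∧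
    L (τ 2) ⊆ G.reg {G.S (σ 0), P₂} ∪ G.reg {G.S (σ 0), G.S (σ 2)}

theorem exists_perm {a b c : Fin 3} (hab : a ≠ b) (hac : a ≠ c) (hbc : b ≠ c) :
    ∃ σ : Equiv.Perm (Fin 3), σ 0 = a ∧ σ 1 = b ∧ σ 2 = c := by
  revert a b c; decide

theorem inner_regO {i j k : Fin 3} (hij : i ≠ j) (hik : i ≠ k) (hjk : j ≠ k) :
    G.inner k = G.regO {G.S i, G.S j} := by
  ext v
  simp only [inner, regO, ← G.side_eq hij hik hjk, Set.mem_ofPred_eq, Set.mem_sdiff,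
    Set.mem_insert_iff, Set.mem_singleton_iff, not_or]
  refine and_congr_right fun hv => ⟨fun h => ⟨h i, h j⟩, fun h l hl => ?_⟩
  have : l = i ∨ l = j ∨ l = k := by omega
  rcases this with rfl | rfl | rfl
  · exact h.1 hl
  · exact h.2 hl
  · subst hl; exact G.src_not_side _ hv

theorem one_vec : (fun _ => (1 : F)) = ![1, 1, 1] := by
  funext i; fin_cases i <;> rfl

theorem core [Fintype F] [Fintype G.V] (hF2 : (2 : F) ≠ 0)
    (hcard : Fintype.card G.V + 1 ≤ Fintype.card F) (L : Fin 3 → Set G.V)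
    (hL : ∀ j, L j ⊆ G.bigPi) (hs : ∀ j k, ¬ L j ⊆ G.side k) (hC : ¬ CIRset G L) :
    ∃ d : G.V → Fin 3 → F, G.PiCode d ∧
      ∀ j, (fun _ => (1 : F)) ∈ Submodule.span F (d '' L j) := by
  have E0 : E F 0 = ![1, 0, 0] := by funext i; fin_cases i <;> simp [E]
  have E1 : E F 1 = ![0, 1, 0] := by funext i; fin_cases i <;> simp [E]
  have E2 : E F 2 = ![0, 0, 1] := by funext i; fin_cases i <;> simp [E]
  by_cases hmain : ∃ a j1 m j2, G.Star a (L j1) ∧ G.Vee m (L j2) ∧ a ≠ m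
  · obtain ⟨a, j1, b, j2, hst, hve, hab⟩ := hmain
    have hj : j1 ≠ j2 := by
      rintro rfl
      obtain ⟨k, -, hk⟩ := hve.1 _ hst.1
      exact hk.2 a rfl
    obtain ⟨c, hca, hcb⟩ : ∃ c : Fin 3, c ≠ a ∧ c ≠ b := third _ _
    obtain ⟨j3, h31, h32⟩ : ∃ c : Fin 3, c ≠ j1 ∧ c ≠ j2 := third _ _
    obtain ⟨d, d1, s1, s2, s3⟩ := G.main_case (L1 := L j1) (L2 := L j2) (L3 := L j3) hF2 hcard
      hab hca.symm hcb.symm hst.1 hst.2.1 hst.2.2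
      (by
        intro v hv
        obtain ⟨k, hk, hvk⟩ := hve.1 v hv
        have : k = a ∨ k = c := by omega
        rcases this with rfl | rfl
        · exact Or.inl hvk
        · exact Or.inr hvk)
      (hve.2 c hcb) (hve.2 a hab) (hL j3) (hs j3)
      (by
        rintro ⟨R, Q, hR, hQ, e1, e2, e3⟩
        obtain ⟨σ, σ0, σ1, σ2⟩ := exists_perm hab hca.symm hcb.symm
        obtain ⟨τ, τ0, τ1, τ2⟩ := exists_perm hj h31.symm h32.symm
        refine hC ⟨σ, τ, R, Q, ?_, ?_, ?_, ?_, ?_⟩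
        · rw [σ1, σ2, ← G.inner_regO hcb.symm hab.symm hca]; exact hR
        · rw [σ1, σ0, ← G.inner_regO hab hca.symm hcb.symm]; exact hQ
        · rw [τ0, σ0]; exact e1
        · rw [τ1]; exact e2
        · rw [τ2, σ0, σ2]; exact e3)
      (by
        rintro ⟨R, Q, hR, hQ, e1, e2, e3⟩
        obtain ⟨σ, σ0, σ1, σ2⟩ := exists_perm hcb hca hab.symm
        obtain ⟨τ, τ0, τ1, τ2⟩ := exists_perm h32 h31 hj.symm
        refine hC ⟨σ, τ, Q, R, ?_, ?_, ?_, ?_, ?_⟩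
        · rw [σ1, σ2, ← G.inner_regO hab.symm hcb.symm hca.symm]; exact hQ
        · rw [σ1, σ0, ← G.inner_regO hcb hca hab.symm]; exact hR
        · rw [τ0, σ0]; exact e1
        · rw [τ1]; exact e2
        · rw [τ2, σ0, σ2]; exact e3)
    refine ⟨d, d1, fun j => ?_⟩
    have : j = j1 ∨ j = j2 ∨ j = j3 := by omega
    rcases this with rfl | rfl | rfl <;> assumption
  have fromw : ∀ w : Fin 3 → Fin 3 → F, (∀ k, w k k = 0) → (∀ k i, i ≠ k → w k i ≠ 0) →
      (∀ W : Submodule F (Fin 3 → F), (∀ k, w k ∈ W) → (fun _ => (1 : F)) ∈ W) →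
      (∀ j a, G.Star a (L j) → ∀ W : Submodule F (Fin 3 → F), E F a ∈ W → w a ∈ W →
        (fun _ => (1 : F)) ∈ W) →
      (∀ j m, G.Vee m (L j) → ∀ W : Submodule F (Fin 3 → F), (∀ k, k ≠ m → w k ∈ W) →
        (fun _ => (1 : F)) ∈ W) →
      ∃ d : G.V → Fin 3 → F, G.PiCode d ∧
        ∀ j, (fun _ => (1 : F)) ∈ Submodule.span F (d '' L j) := by
    intro w h0 h1 h2 h3 h4
    obtain ⟨d, d1, dS, dI⟩ := G.const_code h0
    exact ⟨d, d1, fun j => G.const_ok h0 h1 dS dI (hL j) (hs j) h2 (h3 j) (h4 j)⟩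
  by_cases hstar : ∃ a j, G.Star a (L j)
  · obtain ⟨a, j0, hst⟩ := hstar
    by_cases hvee : ∃ m j, G.Vee m (L j)
    · obtain ⟨m, j2, hve⟩ := hvee
      have hm : ∀ m' j', G.Vee m' (L j') → m' = a := by
        intro m' j' h
        by_contra hc
        exact hmain ⟨a, j0, m', j', hst, h, fun e => hc e.symm⟩
      have ha : ∀ a' j', G.Star a' (L j') → a' = a := by
        intro a' j' h
        by_contra hc
        refine hmain ⟨a', j', m, j2, h, hve, fun e => hc ?_⟩
        rw [e, hm m j2 hve]
      obtain ⟨w, w0, w1, w2, w3⟩ : ∃ w : Fin 3 → Fin 3 → F, (∀ k, w k k = 0) ∧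
          (∀ k i, i ≠ k → w k i ≠ 0) ∧ ((fun _ => (1 : F)) = E F a + w a) ∧
          (∃ i j, i ≠ a ∧ j ≠ a ∧ (fun _ => (1 : F)) = w i - w j) := by
        have : a = 0 ∨ a = 1 ∨ a = 2 := by omega
        rcases this with rfl | rfl | rfl
        · refine ⟨![![0, 1, 1], ![2, 0, 1], ![1, -1, 0]], ?_, ?_, ?_, 1, 2, by decide, by decide, ?_⟩
          · intro k; fin_cases k <;> simp
          · intro k i; fin_cases k <;> fin_cases i <;> simp [hF2]
          · rw [one_vec, E0]; simp
          · rw [one_vec]; simp; norm_num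
        · refine ⟨![![0, 2, 1], ![1, 0, 1], ![-1, 1, 0]], ?_, ?_, ?_, 0, 2, by decide, by decide, ?_⟩
          · intro k; fin_cases k <;> simp
          · intro k i; fin_cases k <;> fin_cases i <;> simp [hF2]
          · rw [one_vec, E1]; simp
          · rw [one_vec]; simp; norm_num
        · refine ⟨![![0, -1, 1], ![1, 0, 2], ![1, 1, 0]], ?_, ?_, ?_, 1, 0, by decide, by decide, ?_⟩
          · intro k; fin_cases k <;> simp
          · intro k i; fin_cases k <;> fin_cases i <;> simp [hF2]
          · rw [one_vec, E2]; simp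
          · rw [one_vec]; simp; norm_num
      obtain ⟨i, j, hi, hj, hw⟩ := w3
      refine fromw w w0 w1 ?_ ?_ ?_
      · intro W hW
        rw [hw]; exact W.sub_mem (hW i) (hW j)
      · intro j' a' h W h1 h2
        obtain rfl := ha a' j' h
        rw [w2]; exact W.add_mem h1 h2
      · intro j' m' h W hW
        obtain rfl := hm m' j' h
        rw [hw]; exact W.sub_mem (hW i hi) (hW j hj)
    · refine fromw ![![0, 1, 1], ![1, 0, 1], ![1, 1, 0]] ?_ ?_ ?_ ?_ ?_
      · intro k; fin_cases k <;> simp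
      · intro k i; fin_cases k <;> fin_cases i <;> simp
      · intro W hW
        have h := W.smul_mem (2 : F)⁻¹ (W.add_mem (W.add_mem (hW 0) (hW 1)) (hW 2))
        convert h using 1
        rw [one_vec]
        funext i
        fin_cases i <;> simp <;> field_simp <;> norm_num
      · intro j a _ W h1 h2
        have h := W.add_mem h1 h2
        convert h using 1
        rw [one_vec]
        have : a = 0 ∨ a = 1 ∨ a = 2 := by omega
        rcases this with rfl | rfl | rfl
        · rw [E0]; simp
        · rw [E1]; simp
        · rw [E2]; simp
      · intro j m h
        exact absurd ⟨m, j, h⟩ hvee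
  · have key : ∀ W : Submodule F (Fin 3 → F), ∀ m : Fin 3, (∀ k, k ≠ m →
        (![![0, 2, 1], ![2, 0, 1], ![1, -1, 0]] : Fin 3 → Fin 3 → F) k ∈ W) →
        (fun _ => (1 : F)) ∈ W := by
      intro W m hW
      have : m = 0 ∨ m = 1 ∨ m = 2 := by omega
      rcases this with rfl | rfl | rfl
      · have h := W.sub_mem (hW 1 (by decide)) (hW 2 (by decide))
        convert h using 1
        rw [one_vec]; simp; norm_num
      · have h := W.add_mem (hW 0 (by decide)) (hW 2 (by decide))
        convert h using 1
        rw [one_vec]; simp; norm_num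
      · have h := W.smul_mem (2 : F)⁻¹ (W.add_mem (hW 0 (by decide)) (hW 1 (by decide)))
        convert h using 1
        rw [one_vec]
        funext i
        fin_cases i <;> simp <;> field_simp <;> norm_num
    refine fromw ![![0, 2, 1], ![2, 0, 1], ![1, -1, 0]] ?_ ?_ ?_ ?_ ?_
    · intro k; fin_cases k <;> simp
    · intro k i; fin_cases k <;> fin_cases i <;> simp [hF2]
    · intro W hW
      exact key W 0 fun k _ => hW k
    · intro j a h
      exact absurd ⟨a, j, h⟩ hstar
    · intro j m _ W hW
      exact key W m hW

end core

section final
variable {n : ℕ} (G : RegionGraph n)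

theorem sep_unique (hsep : G.TerminalSeparable) {v : G.V} (hv : v ∉ G.bigPi) {i j : Fin n}
    (hi : G.Reaches v (G.T i)) (hj : G.Reaches v (G.T j)) : i = j := by
  by_contra hij
  have h := hsep {k | G.Reaches v (G.T k)}
    ((Set.one_lt_ncard_iff (Set.toFinite _)).2 ⟨i, j, hi, hj, hij⟩)
  have : v ∈ G.Omega {k | G.Reaches v (G.T k)} := ⟨hv, fun _ => Iff.rfl⟩
  rw [h] at this
  exact this

theorem sep_omega (hsep : G.TerminalSeparable) {v : G.V} (hv : v ∉ G.bigPi) {j : Fin n}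
    (hj : G.Reaches v (G.T j)) : v ∈ G.Omega {j} := by
  refine ⟨hv, fun k => ⟨?_, fun h => ?_⟩⟩
  · rintro rfl; exact hj
  · exact G.sep_unique hsep hv h hj

theorem bd_eq_Lambda (hsep : G.TerminalSeparable) (j : Fin n) :
    G.bd (G.T j) = G.Lambda {j} := by
  ext Q
  constructor
  · rintro ⟨hQ, R, h1, h2, h3⟩
    exact ⟨hQ, R, h1, G.sep_omega hsep h2 h3⟩
  · rintro ⟨hQ, R, h1, h2⟩
    exact ⟨hQ, R, h1, h2.1, (h2.2 j).1 rfl⟩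

theorem reg_side {Θ : Set G.V} {k : Fin 3} (h : Θ ⊆ G.side k) : G.reg Θ ⊆ G.side k := by
  intro v hv
  induction (show SuperReg G.Adj Θ v from hv) with
  | base hb => exact h hb
  | step h1 h2 ih => exact SuperReg.step h1 (fun P hP => ih P hP (h2 P hP))

theorem reg_span {F : Type} [Field F] {d : G.V → Fin 3 → F} (hd : G.IsLinearCode F d)
    {Θ : Set G.V} {v : G.V} (hv : v ∈ G.reg Θ) : d v ∈ Submodule.span F (d '' Θ) := by
  have hv' : SuperReg G.Adj Θ v := hv
  clear hv
  induction hv' with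
  | base hb => exact Submodule.subset_span ⟨_, hb, rfl⟩
  | step h1 _ ih =>
    obtain ⟨p, hp⟩ := h1
    refine Submodule.span_le.2 ?_ (hd.2 _ ?_)
    · rintro _ ⟨q, hq, rfl⟩
      exact ih q hq
    · rintro i rfl
      exact G.source_no_parent _ _ hp

theorem lam_span {F : Type} [Field F] {d : G.V → Fin 3 → F} (hd : G.IsLinearCode F d)
    (hsep : G.TerminalSeparable) (j : Fin n) (v : G.V) : v ∉ G.bigPi → G.Reaches v (G.T j) →
      d v ∈ Submodule.span F (d '' G.Lambda {j}) := by
  induction v using G.wf.induction with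
  | _ v ih =>
    intro hv hj
    refine Submodule.span_le.2 ?_ (hd.2 v ?_)
    · rintro _ ⟨p, hp, rfl⟩
      by_cases hpP : p ∈ G.bigPi
      · exact Submodule.subset_span ⟨p, ⟨hpP, v, hp, G.sep_omega hsep hv hj⟩, rfl⟩
      · exact ih p hp hpP (ReflTransGen.head hp hj)
    · rintro i rfl
      exact hv (G.src_Pi i)

theorem coord_zero {F : Type} [Field F] {d : G.V → Fin 3 → F} {L : Set G.V} {k : Fin 3}
    (h : ∀ v ∈ L, d v k = 0) {x : Fin 3 → F} (hx : x ∈ Submodule.span F (d '' L)) : x k = 0 := by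
  have : Submodule.span F (d '' L) ≤ LinearMap.ker (LinearMap.proj (R := F) (φ := fun _ => F) k) := by
    refine Submodule.span_le.2 ?_
    rintro _ ⟨v, hv, rfl⟩
    exact h v hv
  exact this hx

theorem backward (G : RegionGraph 3) (hA : G.Assumption1) (hsep : G.TerminalSeparable)
    (hC : G.CIR) : ¬ G.Feasible := by
  rintro ⟨F, _, _, d, hd, hT⟩
  obtain ⟨σ, τ, P, Q, hP, hQ, h1, h2, h3⟩ := hC
  have h01 : σ 0 ≠ σ 1 := fun e => absurd (σ.injective e) (by decide)
  have h02 : σ 0 ≠ σ 2 := fun e => absurd (σ.injective e) (by decide)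
  have h12 : σ 1 ≠ σ 2 := fun e => absurd (σ.injective e) (by decide)
  have hl : ∀ j, (fun _ => (1 : F)) ∈ Submodule.span F (d '' G.Lambda {j}) := by
    intro j
    rw [← hT j]
    exact G.lam_span hd hsep j _ (hA j) ReflTransGen.refl
  have hP0 : d P (σ 0) = 0 := by
    refine coord_zero G ?_ (G.reg_span hd hP.1)
    rintro _ (rfl | rfl)
    · rw [hd.1]; simp [h01]
    · rw [hd.1]; simp [h02]
  have hQ2 : d Q (σ 2) = 0 := by
    refine coord_zero G ?_ (G.reg_span hd hQ.1)
    rintro _ (rfl | rfl)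
    · rw [hd.1]; simp [h02.symm]
    · rw [hd.1]; simp [h12.symm]
  have e1 := hl (τ 0)
  rw [h1, Set.image_pair, Submodule.mem_span_pair] at e1
  obtain ⟨x, y, e1⟩ := e1
  have e11 := congrFun e1 (σ 1)
  have e12 := congrFun e1 (σ 2)
  have e2 := hl (τ 1)
  rw [h2, Set.image_pair, Submodule.mem_span_pair] at e2
  obtain ⟨z, t, e2⟩ := e2
  have e20 := congrFun e2 (σ 0)
  have e21 := congrFun e2 (σ 1)
  have e22 := congrFun e2 (σ 2)
  rw [hd.1] at e11 e12
  simp [h01.symm, h02.symm] at e11 e12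
  simp [hP0, hQ2] at e20 e21 e22
  have hy : y ≠ 0 := by rintro rfl; simp at e11
  have hPP : d P (σ 1) = d P (σ 2) := mul_left_cancel₀ hy (e11.trans e12.symm)
  have ht : t ≠ 0 := by rintro rfl; simp at e20
  have hQ1 : d Q (σ 1) = 0 := by
    rw [hPP, e22] at e21
    have : t * d Q (σ 1) = 0 := by linear_combination e21
    exact (mul_eq_zero.1 this).resolve_left ht
  have : (fun _ => (1 : F)) (σ 1) = 0 := by
    refine coord_zero G (k := σ 1) ?_ (hl (τ 2))
    intro v hv
    rcases h3 hv with hv | hv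
    · refine coord_zero G ?_ (G.reg_span hd hv)
      rintro _ (rfl | rfl)
      · rw [hd.1]; simp [h01.symm]
      · exact hQ1
    · refine coord_zero G ?_ (G.reg_span hd hv)
      rintro _ (rfl | rfl)
      · rw [hd.1]; simp [h01.symm]
      · rw [hd.1]; simp [h12]
  exact one_ne_zero this

theorem feasible_of_core (G : RegionGraph 3) (r : Fin 3 → G.V) (hr : ∀ j, r j ∉ G.bigPi)
    (hrT : ∀ j, G.Reaches (r j) (G.T j))
    (hdis : ∀ i j v, v ∉ G.bigPi → G.Reaches v (r i) → G.Reaches v (r j) → r i = r j)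
    (hC : ¬ CIRset G (fun j => G.bd (r j))) : G.Feasible := by
  haveI := G.fintypeV
  obtain ⟨p, hp, hprime⟩ := Nat.exists_infinite_primes (Fintype.card G.V + 3)
  haveI : Fact p.Prime := ⟨hprime⟩
  have h2 : (2 : ZMod p) ≠ 0 := by
    intro h
    have h' : ((2 : ℕ) : ZMod p) = 0 := by exact_mod_cast h
    rw [ZMod.natCast_eq_zero_iff] at h'
    have := Nat.le_of_dvd (by norm_num) h'
    omega
  obtain ⟨d, d1, d2⟩ := G.core (F := ZMod p) h2 (by rw [ZMod.card]; omega)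
    (fun j => G.bd (r j)) (fun j v hv => hv.1) (fun j => G.bd_not_side (hr j)) hC
  exact G.feasible_of_roots r hr hrT hdis d d1 d2

theorem not_CIRset_of_eq (G : RegionGraph 3) {L : Fin 3 → Set G.V} {i j : Fin 3} (hij : i ≠ j)
    (hL : L i = L j) : ¬ CIRset G L := by
  rintro ⟨σ, τ, P, Q, hP, hQ, h1, h2, h3⟩
  have h01 : σ 0 ≠ σ 1 := fun e => absurd (σ.injective e) (by decide)
  have h02 : σ 0 ≠ σ 2 := fun e => absurd (σ.injective e) (by decide)
  have h12 : σ 1 ≠ σ 2 := fun e => absurd (σ.injective e) (by decide)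
  rw [← G.inner_regO h12 h01.symm h02.symm] at hP
  rw [← G.inner_regO h01 h02 h12] at hQ
  have hP2 : P ∉ L (τ 2) := by
    intro h
    have hs : ∃ k, k ≠ σ 0 ∧ P ∈ G.side k := by
      rcases h3 h with h | h
      · refine ⟨σ 2, h02.symm, G.reg_side ?_ h⟩
        rintro _ (rfl | rfl)
        · exact G.src_side h02
        · exact hQ.1
      · refine ⟨σ 1, h01.symm, G.reg_side ?_ h⟩
        rintro _ (rfl | rfl)
        · exact G.src_side h01
        · exact G.src_side h12.symm
    obtain ⟨k, hk, hPk⟩ := hs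
    obtain ⟨l, hl⟩ := G.side_inter hk hPk hP.1
    exact hP.2 l hl
  have hP0 : P ∈ L (τ 0) := by rw [h1]; simp
  have hP1 : P ∈ L (τ 1) := by rw [h2]; simp
  have hS0 : G.S (σ 0) ∈ L (τ 0) := by rw [h1]; simp
  have hS1 : G.S (σ 0) ∉ L (τ 1) := by
    rw [h2]
    rintro (h | h)
    · exact hP.2 _ h.symm
    · exact hQ.2 _ h.symm
  have n01 : L (τ 0) ≠ L (τ 1) := fun e => hS1 (e ▸ hS0)
  have n02 : L (τ 0) ≠ L (τ 2) := fun e => hP2 (e ▸ hP0)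
  have n12 : L (τ 1) ≠ L (τ 2) := fun e => hP2 (e ▸ hP1)
  obtain ⟨i, rfl⟩ := τ.surjective i
  obtain ⟨j, rfl⟩ := τ.surjective j
  have hi : i = 0 ∨ i = 1 ∨ i = 2 := by omega
  have hj : j = 0 ∨ j = 1 ∨ j = 2 := by omega
  rcases hi with rfl | rfl | rfl <;> rcases hj with rfl | rfl | rfl
  · exact hij rfl
  · exact n01 hL
  · exact n02 hL
  · exact n01 hL.symm
  · exact hij rfl
  · exact n12 hL
  · exact n02 hL.symm
  · exact n12 hL.symm
  · exact hij rfl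

theorem nonsep (G : RegionGraph 3) (hA : G.Assumption1) (hsep : ¬ G.TerminalSeparable) :
    G.Feasible := by
  classical
  let X : Set G.V := {v | v ∉ G.bigPi ∧ ∃ i j, i ≠ j ∧ G.Reaches v (G.T i) ∧ G.Reaches v (G.T j)}
  have hX : X.Nonempty := by
    unfold TerminalSeparable at hsep
    push Not at hsep
    obtain ⟨I, hI, v, hv⟩ := hsep
    obtain ⟨i, j, hi, hj, hij⟩ := (Set.one_lt_ncard_iff (Set.toFinite _)).1 hI
    exact ⟨v, hv.1, i, j, hij, (hv.2 i).1 hi, (hv.2 j).1 hj⟩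
  obtain ⟨R, ⟨hR, i₀, j₀, hij, hi, hj⟩, hmin⟩ := G.wfT.has_min X hX
  have hRu : ∀ v, v ∉ G.bigPi → G.Reaches v R → v = R := by
    intro v hv h
    rcases reflTransGen_iff_eq_or_transGen.1 h with h' | h'
    · exact h'.symm
    · exact absurd h' (hmin v ⟨hv, i₀, j₀, hij, ReflTransGen.trans h hi, ReflTransGen.trans h hj⟩)
  let r : Fin 3 → G.V := fun j => if G.Reaches R (G.T j) then R else G.T j
  have r1 : ∀ j, G.Reaches R (G.T j) → r j = R := fun j h => if_pos h
  have r2 : ∀ j, ¬ G.Reaches R (G.T j) → r j = G.T j := fun j h => if_neg h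
  refine feasible_of_core G r ?_ ?_ ?_ (not_CIRset_of_eq G hij ?_)
  · intro j
    by_cases h : G.Reaches R (G.T j)
    · rw [r1 j h]; exact hR
    · rw [r2 j h]; exact hA j
  · intro j
    by_cases h : G.Reaches R (G.T j)
    · rw [r1 j h]; exact h
    · rw [r2 j h]; exact ReflTransGen.refl
  · intro i j v hv h1 h2
    by_cases hRi : G.Reaches R (G.T i) <;> by_cases hRj : G.Reaches R (G.T j)
    · rw [r1 i hRi, r1 j hRj]
    · rw [r1 i hRi] at h1
      rw [r2 j hRj] at h2
      rw [hRu v hv h1] at h2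
      exact absurd h2 hRj
    · rw [r1 j hRj] at h2
      rw [r2 i hRi] at h1
      rw [hRu v hv h2] at h1
      exact absurd h1 hRi
    · have hi1 : i ≠ i₀ := fun e => hRi (e ▸ hi)
      have hi2 : i ≠ j₀ := fun e => hRi (e ▸ hj)
      have hj1 : j ≠ i₀ := fun e => hRj (e ▸ hi)
      have hj2 : j ≠ j₀ := fun e => hRj (e ▸ hj)
      have : i = j := by omega
      rw [this]
  · show G.bd (r i₀) = G.bd (r j₀)
    rw [r1 _ hi, r1 _ hj]

theorem sep_case (G : RegionGraph 3) (hA : G.Assumption1) (hsep : G.TerminalSeparable)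
    (hC : ¬ G.CIR) : G.Feasible := by
  refine feasible_of_core G G.T hA (fun _ => ReflTransGen.refl) ?_ ?_
  · intro i j v hv h1 h2
    rw [G.sep_unique hsep hv h1 h2]
  · simp only [G.bd_eq_Lambda hsep]
    exact hC

end final

end RegionGraph

/-- A region graph with exactly three terminals (satisfying Assumption 1) is
infeasible iff it is terminal-separable and condition (C-IR) holds. -/
theorem three_terminal_infeasibility (G : RegionGraph 3)
    (hA : G.Assumption1) :
    ¬ G.Feasible ↔ G.TerminalSeparable ∧ G.CIR := by
  constructor
  · intro hF
    have hsep : G.TerminalSeparable := by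
      by_contra h
      exact hF (RegionGraph.nonsep G hA h)
    refine ⟨hsep, ?_⟩
    by_contra h
    exact hF (RegionGraph.sep_case G hA hsep h)
  · rintro ⟨h1, h2⟩
    exact RegionGraph.backward G hA h1 h2

end SumNetworksPaper
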